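/- Let n ≥ 2 and let K ⊂ ℝ^{n+1} be a smooth, strictly convex body with the origin in its interior, whose support function h, radial function r, and Gauss curvature 𝒦 satisfy h^{p-1} |Dh|^{n+1-q} 𝒦 = 1 on S^n (equivalently h^{n+2}/𝒦 = h^{n+1+p} r^{n+1-q}). Set α = q − n − 1 and dV = h σ_n dμ with σ_n = 1/𝒦. Then (n+1+p) ∫ r^{2α} |∇̄h|² dV ≤ α(α+1) ∫ r^{2α} ⟨∇̄ log r, h ∇̄h⟩ dV + n |∫ r^{α} X dV|² / ∫ dV, where X = Dh and |·| denotes the Euclidean norm on ℝ^{n+1}. -/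

import Mathlib

open MeasureTheory Matrix Metric
open scoped RealInnerProductSpace

noncomputable section

/-- Euclidean space `ℝ^{n+1}`. -/
abbrev Euc (n : ℕ) : Type := EuclideanSpace ℝ (Fin (n + 1))

/-- The Euclidean Hessian matrix of `H : ℝ^{n+1} → ℝ` at `x`. -/
def ehess (n : ℕ) (H : Euc n → ℝ) (x : Euc n) : Matrix (Fin (n + 1)) (Fin (n + 1)) ℝ :=
  Matrix.of fun i j =>
    fderiv ℝ (fun y => fderiv ℝ H y (EuclideanSpace.single j 1)) x (EuclideanSpace.single i 1)

/-- For the 1-homogeneous extension `H` of the support function `h` and `x ∈ S^n`, the matrix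
`D²H(x) + h(x)·x xᵀ`.  Its restriction to the tangent space `x^⊥ = T_x S^n` is
`A[h] = ∇̄²h + h ḡ`, and `x` is an eigenvector with eigenvalue `h(x)`. -/
def bmat (n : ℕ) (H : Euc n → ℝ) (x : Euc n) : Matrix (Fin (n + 1)) (Fin (n + 1)) ℝ :=
  ehess n H x + Matrix.of fun i j => H x * (x i * x j)

/-- `σ_n = det A[h] = det(∇̄²h + h ḡ)/det ḡ`, computed as `det(bmat)/h`. -/
def sigman (n : ℕ) (H : Euc n → ℝ) (x : Euc n) : ℝ :=
  Matrix.det (bmat n H x) / H x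

/-- The Gauss curvature `𝒦 = 1/σ_n`. -/
def gaussCurv (n : ℕ) (H : Euc n → ℝ) (x : Euc n) : ℝ := (sigman n H x)⁻¹

/-- The round (spherical) gradient `∇̄f` at `x ∈ S^n`: the Euclidean gradient of the
0-homogeneous extension `y ↦ f(y/‖y‖)`.  It depends only on `f|_{S^n}` and lies in `T_x S^n`. -/
def sphGrad (n : ℕ) (f : Euc n → ℝ) (x : Euc n) : Euc n :=
  gradient (fun y => f (‖y‖⁻¹ • y)) x

/-- The function `log (h^{n+2}/𝒦)` (as a function of `y`; on the sphere it agrees with the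
centro-affine expression appearing in the paper). -/
def logQ (n : ℕ) (H : Euc n → ℝ) (y : Euc n) : ℝ :=
  Real.log ((H y) ^ (n + 2) / gaussCurv n H y)

/-- The centro-affine inner product `g(∇f, ∇u) = h ⟨A[h]⁻¹ ∇̄f, ∇̄u⟩` of the `g`-gradients of
`f` and `u`, where `g = A[h]/h` is the centro-affine metric. -/
def gInner (n : ℕ) (H f u : Euc n → ℝ) (x : Euc n) : ℝ :=
  H x * ∑ i, (bmat n H x)⁻¹.mulVec (fun j => sphGrad n f x j) i * sphGrad n u x i

/-- The squared centro-affine norm `|∇f|_g²` of the `g`-gradient of `f`. -/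
def gNormSq (n : ℕ) (H f : Euc n → ℝ) (x : Euc n) : ℝ := gInner n H f f x

/-- The centro-affine Laplacian `Δf = div_g(∇ f)` (with respect to the centro-affine connection
`∇` induced by the centro-affine normal `ξ = X`, and the centro-affine metric `g = A[h]/h`),
computed via the identity `Δf = tr_g(A[hf]/h) - n f`, i.e.
`Δf = tr(B[h]⁻¹ B[hf]) - (n+1) f` where `B[u] = D²ũ + u·x xᵀ` for the 1-homogeneous
extension `ũ` of `u`. -/
def caLap (n : ℕ) (H f : Euc n → ℝ) (x : Euc n) : ℝ :=
  Matrix.trace ((bmat n H x)⁻¹ * bmat n (fun y => H y * f (‖y‖⁻¹ • y)) x) - (n + 1) * f x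

/-- The spherical Lebesgue measure on `S^n ⊂ ℝ^{n+1}` (up to a positive constant). -/
def sphMeasure (n : ℕ) : Measure (sphere (0 : Euc n) 1) :=
  (volume : Measure (Euc n)).toSphere

/-- The density of the cone-volume-type measure `dV = h σ_n dμ` with respect to the spherical
Lebesgue measure. -/
def volDens (n : ℕ) (H : Euc n → ℝ) (x : Euc n) : ℝ := H x * sigman n H x

/-! Two facts about the support function `h` are combined.

* A weighted Poincaré inequality: if `∇f = D²h ω` on the sphere, then
  `n ∫ f² dV ≤ ∫ h ⟨D²h ω, ω⟩ dV + n (∫ f dV)² / ∫ dV`. It suffices to treat `f` of mean zero. Move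
  the boundary point `X(x)` of `K` to `(1 ± t f - t²/2 (h ⟨D²h ω, ω⟩ + δ)) X(x)`. For small `t` the
  two resulting star bodies lie below the support functions `(1 ± t f) h`, so their midpoints lie in
  `K`, and the second variation of the Brunn–Minkowski inequality at `t = 0` is the claim.
* The divergence theorem on the sphere for the homogeneous field `h^{p+1} r^α X`.

The Poincaré inequality is applied to the coordinates of `r^α X`: since `D(r^α X) = M D²h` with an
explicit symmetric `M`, the energies sum to a trace. The equation `h^{p-1} r^{-α} 𝒦 = 1` turns
`r^{2α} dV` into `h^p r^α dμ`, and the divergence theorem eliminates the Laplacian term. -/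

open scoped ENNReal Topology Pointwise

/-! ### The Brunn–Minkowski inequality -/

section BrunnMinkowski

variable {a b : ℝ}

theorem ennreal_rpow_mul_rpow_le_add (ha : 0 < a) (hb : 0 < b) (hab : a + b = 1)
    (x y : ℝ≥0∞) : x ^ a * y ^ b ≤ ENNReal.ofReal a * x + ENNReal.ofReal b * y := by
  have hconj : a⁻¹.HolderConjugate b⁻¹ := Real.holderConjugate_iff.2
    ⟨(one_lt_inv₀ ha).2 (by linarith), by simpa using hab⟩
  simpa [← ENNReal.rpow_mul, ha.ne', hb.ne', ENNReal.ofReal_inv_of_pos, ha, hb, div_eq_mul_inv,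
    mul_comm] using ENNReal.young_inequality (x ^ a) (y ^ b) hconj

/- The translates `a • A + b • min B` and `a • max A + b • B` meet in one point only. -/
theorem volume_add_volume_le_of_isCompact (ha : 0 < a) (hb : 0 < b) {A B C : Set ℝ}
    (hA : IsCompact A) (hB : IsCompact B) (hA0 : A.Nonempty) (hB0 : B.Nonempty)
    (h : ∀ x ∈ A, ∀ y ∈ B, a * x + b * y ∈ C) :
    ENNReal.ofReal a * volume A + ENNReal.ofReal b * volume B ≤ volume C := by
  obtain ⟨M, hMA, hM⟩ := hA.exists_isGreatest hA0
  obtain ⟨m, hmB, hm⟩ := hB.exists_isLeast hB0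
  have volume_vadd_smul (s t : ℝ) (ht : 0 < t) (D : Set ℝ) :
      volume (s +ᵥ t • D) = ENNReal.ofReal t * volume D := by
    rw [measure_vadd, Measure.addHaar_smul]
    simp [abs_of_pos ht]
  have inter_subset : (b * m +ᵥ a • A) ∩ (a * M +ᵥ b • B) ⊆ {a * M + b * m} := by
    rintro _ ⟨⟨_, ⟨x, hx, rfl⟩, rfl⟩, ⟨_, ⟨y, hy, rfl⟩, hxy⟩⟩
    simp only [vadd_eq_add, smul_eq_mul, Set.mem_singleton_iff] at hxy ⊢
    linarith [mul_le_mul_of_nonneg_left (hM hx) ha.le, mul_le_mul_of_nonneg_left (hm hy) hb.le]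
  have union_subset : (b * m +ᵥ a • A) ∪ (a * M +ᵥ b • B) ⊆ C := by
    rintro _ (⟨_, ⟨x, hx, rfl⟩, rfl⟩ | ⟨_, ⟨y, hy, rfl⟩, rfl⟩)
    · simpa [add_comm] using h x hx m hmB
    · simpa using h M hMA y hy
  have measurable_right : MeasurableSet (a * M +ᵥ b • B) :=
    ((hB.smul b).vadd (a * M)).measurableSet
  rw [← volume_vadd_smul (b * m) a ha, ← volume_vadd_smul (a * M) b hb,
    ← measure_union₀ measurable_right.nullMeasurableSet
      (measure_mono_null inter_subset (measure_singleton _))]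
  exact measure_mono union_subset

theorem volume_add_volume_le (ha : 0 < a) (hb : 0 < b) {A B C : Set ℝ}
    (hA : MeasurableSet A) (hB : MeasurableSet B) (hA0 : A.Nonempty) (hB0 : B.Nonempty)
    (h : ∀ x ∈ A, ∀ y ∈ B, a * x + b * y ∈ C) :
    ENNReal.ofReal a * volume A + ENNReal.ofReal b * volume B ≤ volume C := by
  obtain ⟨x₀, hx₀⟩ := hA0
  obtain ⟨y₀, hy₀⟩ := hB0
  rw [hA.measure_eq_iSup_isCompact, hB.measure_eq_iSup_isCompact]
  simp only [iSup_and', ENNReal.mul_iSup]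
  refine ENNReal.biSup_add_biSup_le' (p := fun K => K ⊆ A ∧ IsCompact K)
    (q := fun K => K ⊆ B ∧ IsCompact K) ⟨∅, by simp⟩ ⟨∅, by simp⟩ ?_
  rintro A' ⟨hA'A, hA'⟩ B' ⟨hB'B, hB'⟩
  calc ENNReal.ofReal a * volume A' + ENNReal.ofReal b * volume B'
      ≤ ENNReal.ofReal a * volume (insert x₀ A') + ENNReal.ofReal b * volume (insert y₀ B') := by
        gcongr <;> exact Set.subset_insert _ _
    _ ≤ volume C := volume_add_volume_le_of_isCompact ha hb (hA'.insert x₀) (hB'.insert y₀)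
        (Set.insert_nonempty _ _) (Set.insert_nonempty _ _) fun x hx y hy =>
          h x (Set.insert_subset hx₀ hA'A hx) y (Set.insert_subset hy₀ hB'B hy)

theorem lintegral_min_one_eq {X : Type*} [MeasurableSpace X] (μ : Measure X) {f : X → ℝ≥0∞}
    (hf : Measurable f) :
    ∫⁻ x, min (f x) 1 ∂μ = ∫⁻ t in Set.Ioo (0 : ℝ) 1, μ {x | ENNReal.ofReal t < f x} := by
  have min_ne_top (x : X) : min (f x) 1 ≠ ⊤ := ne_top_of_le_ne_top ENNReal.one_ne_top inf_le_right
  have layer_cake := lintegral_eq_lintegral_meas_lt μ (f := fun x => (min (f x) 1).toReal)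
    (Filter.Eventually.of_forall fun x => ENNReal.toReal_nonneg)
    (hf.min measurable_const).ennreal_toReal.aemeasurable
  simp only [ENNReal.ofReal_toReal (min_ne_top _)] at layer_cake
  rw [layer_cake, ← lintegral_indicator measurableSet_Ioi, ← lintegral_indicator measurableSet_Ioo]
  congr 1 with t
  by_cases ht0 : 0 < t
  · have level_eq : {x | t < (min (f x) 1).toReal} = {x | ENNReal.ofReal t < f x ∧ t < 1} := by
      ext x
      simp only [Set.mem_ofPred_eq, ← ENNReal.ofReal_lt_iff_lt_toReal ht0.le (min_ne_top x),
        lt_min_iff, ENNReal.ofReal_lt_one]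
    by_cases ht1 : t < 1 <;> simp [ht0, ht1, level_eq]
  · simp [ht0]

theorem add_le_lintegral_of_iSup_eq_one (ha : 0 < a) (hb : 0 < b) (hab : a + b = 1)
    {u v w : ℝ → ℝ≥0∞} (hu : Measurable u) (hv : Measurable v) (hw : Measurable w)
    (hu1 : ⨆ x, u x = 1) (hv1 : ⨆ x, v x = 1)
    (h : ∀ x y, u x ^ a * v y ^ b ≤ w (a * x + b * y)) :
    ENNReal.ofReal a * (∫⁻ x, u x) + ENNReal.ofReal b * (∫⁻ x, v x) ≤ ∫⁻ x, w x := by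
  have measurable_level (f : ℝ → ℝ≥0∞) :
      Measurable fun t : ℝ => volume {x | ENNReal.ofReal t < f x} :=
    Antitone.measurable fun s t hst =>
      measure_mono fun x hx => (ENNReal.ofReal_le_ofReal hst).trans_lt hx
  have lintegral_eq {f : ℝ → ℝ≥0∞} (hf : Measurable f) (hf1 : ⨆ x, f x = 1) :
      ∫⁻ x, f x = ∫⁻ t in Set.Ioo (0 : ℝ) 1, volume {x | ENNReal.ofReal t < f x} := by
    rw [← lintegral_min_one_eq volume hf]
    exact lintegral_congr fun x => (min_eq_left (hf1 ▸ le_iSup f x)).symm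
  refine le_trans ?_ (lintegral_mono fun x => min_le_left (w x) 1)
  rw [lintegral_eq hu hu1, lintegral_eq hv hv1, lintegral_min_one_eq volume hw,
    ← lintegral_const_mul _ (measurable_level u), ← lintegral_const_mul _ (measurable_level v),
    ← lintegral_add_left ((measurable_level u).const_mul _)]
  refine setLIntegral_mono' measurableSet_Ioo fun t ht => ?_
  have ht1 : ENNReal.ofReal t < 1 := ENNReal.ofReal_lt_one.2 ht.2
  have level_nonempty {f : ℝ → ℝ≥0∞} (hf1 : ⨆ x, f x = 1) :
      {x | ENNReal.ofReal t < f x}.Nonempty := by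
    rwa [← hf1, lt_iSup_iff] at ht1
  refine volume_add_volume_le ha hb (measurableSet_lt measurable_const hu)
    (measurableSet_lt measurable_const hv) (level_nonempty hu1) (level_nonempty hv1)
    fun x hx y hy => ?_
  calc ENNReal.ofReal t = ENNReal.ofReal t ^ a * ENNReal.ofReal t ^ b := by
        rw [← ENNReal.rpow_add_of_nonneg _ _ ha.le hb.le, hab, ENNReal.rpow_one]
    _ < u x ^ a * v y ^ b :=
        ENNReal.mul_lt_mul (ENNReal.rpow_lt_rpow hx ha) (ENNReal.rpow_lt_rpow hy hb)
    _ ≤ w (a * x + b * y) := h x y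

theorem prekopa_leindler_real_of_iSup_ne_top (ha : 0 < a) (hb : 0 < b) (hab : a + b = 1)
    {u v w : ℝ → ℝ≥0∞} (hu : Measurable u) (hv : Measurable v) (hw : Measurable w)
    (hu_top : ⨆ x, u x ≠ ⊤) (hv_top : ⨆ x, v x ≠ ⊤)
    (h : ∀ x y, u x ^ a * v y ^ b ≤ w (a * x + b * y)) :
    (∫⁻ x, u x) ^ a * (∫⁻ x, v x) ^ b ≤ ∫⁻ x, w x := by
  set S := ⨆ x, u x with hS
  set T := ⨆ x, v x with hT
  have lintegral_eq_zero {f : ℝ → ℝ≥0∞} (hf : ⨆ x, f x = 0) : ∫⁻ x, f x = 0 := by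
    simp [ENNReal.iSup_eq_zero.1 hf]
  rcases eq_or_ne S 0 with hS0 | hS0
  · simp [lintegral_eq_zero hS0, ha]
  rcases eq_or_ne T 0 with hT0 | hT0
  · simp [lintegral_eq_zero hT0, hb]
  have hR0 : S ^ a * T ^ b ≠ 0 := by simp [hS0, hT0, hu_top, hv_top]
  have hR_top : S ^ a * T ^ b ≠ ⊤ := by
    simp [ENNReal.mul_eq_top, hS0, hT0, hu_top, hv_top]
  have scale (x y : ℝ≥0∞) :
      (S⁻¹ * x) ^ a * (T⁻¹ * y) ^ b = (S ^ a * T ^ b)⁻¹ * (x ^ a * y ^ b) := by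
    rw [ENNReal.mul_rpow_of_nonneg _ _ ha.le, ENNReal.mul_rpow_of_nonneg _ _ hb.le,
      ENNReal.inv_rpow, ENNReal.inv_rpow, ENNReal.mul_inv (by simp [hS0, hu_top])
        (by simp [hS0, hu_top])]
    ring
  have normalized := add_le_lintegral_of_iSup_eq_one ha hb hab (hu.const_mul S⁻¹)
    (hv.const_mul T⁻¹) (hw.const_mul (S ^ a * T ^ b)⁻¹)
    (by rw [← ENNReal.mul_iSup, ← hS, ENNReal.inv_mul_cancel hS0 hu_top])
    (by rw [← ENNReal.mul_iSup, ← hT, ENNReal.inv_mul_cancel hT0 hv_top])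
    fun x y => by rw [scale]; gcongr; exact h x y
  rw [lintegral_const_mul _ hu, lintegral_const_mul _ hv, lintegral_const_mul _ hw] at normalized
  have := (ennreal_rpow_mul_rpow_le_add ha hb hab _ _).trans normalized
  rwa [scale, ENNReal.mul_le_mul_iff_right (ENNReal.inv_ne_zero.2 hR_top)
    (ENNReal.inv_ne_top.2 hR0)] at this

theorem lintegral_eq_iSup_lintegral_min_natCast {X : Type*} [MeasurableSpace X] (μ : Measure X)
    {f : X → ℝ≥0∞} (hf : Measurable f) : ∫⁻ x, f x ∂μ = ⨆ m : ℕ, ∫⁻ x, min (f x) m ∂μ := by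
  rw [← lintegral_iSup (fun m => hf.min measurable_const)]
  · exact lintegral_congr fun x => by rw [← inf_iSup_eq, ENNReal.iSup_natCast, inf_top_eq]
  · exact fun m k hmk x => inf_le_inf_left _ (by exact_mod_cast hmk)

theorem prekopa_leindler_real (ha : 0 < a) (hb : 0 < b) (hab : a + b = 1)
    {u v w : ℝ → ℝ≥0∞} (hu : Measurable u) (hv : Measurable v) (hw : Measurable w)
    (h : ∀ x y, u x ^ a * v y ^ b ≤ w (a * x + b * y)) :
    (∫⁻ x, u x) ^ a * (∫⁻ x, v x) ^ b ≤ ∫⁻ x, w x := by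
  have iSup_min_ne_top (f : ℝ → ℝ≥0∞) (m : ℕ) : ⨆ x, min (f x) m ≠ ⊤ :=
    ne_top_of_le_ne_top (ENNReal.natCast_ne_top m) (iSup_le fun x => min_le_right _ _)
  have truncated (m k : ℕ) :
      (∫⁻ x, min (u x) m) ^ a * (∫⁻ x, min (v x) k) ^ b ≤ ∫⁻ x, w x :=
    prekopa_leindler_real_of_iSup_ne_top ha hb hab (hu.min measurable_const)
      (hv.min measurable_const) hw (iSup_min_ne_top u m) (iSup_min_ne_top v k) fun x y =>
        le_trans (by gcongr <;> exact min_le_left _ _) (h x y)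
  have rpow_iSup {c : ℝ} (hc : 0 < c) (f : ℕ → ℝ≥0∞) : (⨆ m, f m) ^ c = ⨆ m, f m ^ c :=
    (ENNReal.orderIsoRpow c hc).map_iSup f
  rw [lintegral_eq_iSup_lintegral_min_natCast volume hu,
    lintegral_eq_iSup_lintegral_min_natCast volume hv, rpow_iSup ha, rpow_iSup hb, ENNReal.iSup_mul]
  simp only [ENNReal.mul_iSup]
  exact iSup₂_le truncated

theorem measurable_fin_cons (n : ℕ) :
    Measurable fun q : ℝ × (Fin n → ℝ) => (Fin.cons q.1 q.2 : Fin (n + 1) → ℝ) :=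
  measurable_pi_iff.2 <| Fin.forall_fin_succ.2
    ⟨by simpa using measurable_fst, fun j => by simpa using by fun_prop⟩

theorem lintegral_piFinSucc {n : ℕ} {f : (Fin (n + 1) → ℝ) → ℝ≥0∞} (hf : Measurable f) :
    ∫⁻ x, f x = ∫⁻ s : ℝ, ∫⁻ z : Fin n → ℝ, f (Fin.cons s z) := by
  rw [← (volume_preserving_piFinSuccAbove (fun _ : Fin (n + 1) => ℝ) 0).symm.lintegral_comp hf,
    Measure.volume_eq_prod]
  simpa [MeasurableEquiv.piFinSuccAbove, Fin.consEquiv] using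
    lintegral_prod _ (hf.comp (measurable_fin_cons n)).aemeasurable

theorem prekopa_leindler_pi (ha : 0 < a) (hb : 0 < b) (hab : a + b = 1) (n : ℕ)
    {u v w : (Fin n → ℝ) → ℝ≥0∞} (hu : Measurable u) (hv : Measurable v) (hw : Measurable w)
    (h : ∀ x y, u x ^ a * v y ^ b ≤ w (a • x + b • y)) :
    (∫⁻ x, u x) ^ a * (∫⁻ x, v x) ^ b ≤ ∫⁻ x, w x := by
  induction n with
  | zero =>
    have lintegral_eq (f : (Fin 0 → ℝ) → ℝ≥0∞) : ∫⁻ x, f x = f 0 := by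
      rw [lintegral_unique, ← Unique.eq_default 0]
      simp [volume_pi]
    simpa only [lintegral_eq, smul_zero, add_zero] using h 0 0
  | succ n ih =>
    have measurable_fiber {f : (Fin (n + 1) → ℝ) → ℝ≥0∞} (hf : Measurable f) (s : ℝ) :
        Measurable fun z : Fin n → ℝ => f (Fin.cons s z) :=
      (hf.comp (measurable_fin_cons n)).comp measurable_prodMk_left
    have measurable_lintegral {f : (Fin (n + 1) → ℝ) → ℝ≥0∞} (hf : Measurable f) :
        Measurable fun s : ℝ => ∫⁻ z : Fin n → ℝ, f (Fin.cons s z) :=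
      (hf.comp (measurable_fin_cons n)).lintegral_prod_right'
    rw [lintegral_piFinSucc hu, lintegral_piFinSucc hv, lintegral_piFinSucc hw]
    refine prekopa_leindler_real ha hb hab (measurable_lintegral hu) (measurable_lintegral hv)
      (measurable_lintegral hw) fun s t =>
        ih (measurable_fiber hu s) (measurable_fiber hv t) (measurable_fiber hw _) fun x y =>
          (h _ _).trans_eq (congrArg w ?_)
    ext i
    refine Fin.cases ?_ (fun j => ?_) i <;> simp

theorem brunn_minkowski (ha : 0 < a) (hb : 0 < b) (hab : a + b = 1) {n : ℕ}
    {A B C : Set (EuclideanSpace ℝ (Fin n))} (hA : MeasurableSet A) (hB : MeasurableSet B)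
    (hC : MeasurableSet C) (h : ∀ x ∈ A, ∀ y ∈ B, a • x + b • y ∈ C) :
    volume A ^ a * volume B ^ b ≤ volume C := by
  have toLp_preserving := PiLp.volume_preserving_toLp (Fin n)
  have volume_eq {D : Set (EuclideanSpace ℝ (Fin n))} (hD : MeasurableSet D) :
      volume D = ∫⁻ x, (WithLp.toLp 2 ⁻¹' D).indicator 1 x := by
    rw [lintegral_indicator_one (toLp_preserving.measurable hD),
      toLp_preserving.measure_preimage hD.nullMeasurableSet]
  have measurable_indicator {D : Set (EuclideanSpace ℝ (Fin n))} (hD : MeasurableSet D) :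
      Measurable ((WithLp.toLp 2 ⁻¹' D).indicator (1 : (Fin n → ℝ) → ℝ≥0∞)) :=
    measurable_one.indicator (toLp_preserving.measurable hD)
  rw [volume_eq hA, volume_eq hB, volume_eq hC]
  refine prekopa_leindler_pi ha hb hab n (measurable_indicator hA) (measurable_indicator hB)
    (measurable_indicator hC) fun x y => ?_
  by_cases hx : x ∈ WithLp.toLp 2 ⁻¹' A
  · by_cases hy : y ∈ WithLp.toLp 2 ⁻¹' B
    · have hxy : a • x + b • y ∈ WithLp.toLp 2 ⁻¹' C := h _ hx _ hy
      simp [hx, hy, hxy]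
    · simp [hy, hb]
  · simp [hx, ha]

end BrunnMinkowski

/-! ### Positively homogeneous functions and second-order calculus -/

section Homogeneous

variable {E F : Type*} [NormedAddCommGroup E] [NormedSpace ℝ E] [NormedAddCommGroup F]
  [NormedSpace ℝ F]

/-- `f` is positively homogeneous of (real) degree `m`. -/
def IsPosHomogeneous (m : ℝ) (f : E → F) : Prop :=
  ∀ c : ℝ, 0 < c → ∀ x, f (c • x) = c ^ m • f x

namespace IsPosHomogeneous

variable {m : ℝ} {f : E → F}

theorem fderiv (hf : IsPosHomogeneous m f) : IsPosHomogeneous (m - 1) (fderiv ℝ f) := by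
  intro c hc x
  have h : c • _root_.fderiv ℝ f (c • x) = c ^ m • _root_.fderiv ℝ f x := by
    rw [← fderiv_comp_smul, funext fun y => hf c hc y]
    exact congrFun (fderiv_const_smul_field (f := f) (c ^ m)) x
  rw [Real.rpow_sub_one hc.ne', div_eq_inv_mul, mul_smul, ← h, inv_smul_smul₀ hc.ne']

theorem fderiv_apply_self (hf : IsPosHomogeneous m f) {x : E} (hx : DifferentiableAt ℝ f x) :
    _root_.fderiv ℝ f x x = m • f x := by
  have along_ray : HasDerivAt (fun t : ℝ => f (t • x)) (_root_.fderiv ℝ f x x) 1 := by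
    have hx' : HasFDerivAt f (_root_.fderiv ℝ f x) ((1 : ℝ) • x) := by
      simpa using hx.hasFDerivAt
    simpa [Function.comp_def] using hx'.comp_hasDerivAt 1 ((hasDerivAt_id (1 : ℝ)).smul_const x)
  have power : HasDerivAt (fun t : ℝ => t ^ m • f x) (m • f x) 1 := by
    simpa using (Real.hasDerivAt_rpow_const (p := m) (Or.inl one_ne_zero)).smul_const (f x)
  refine along_ray.unique (power.congr_of_eventuallyEq ?_)
  filter_upwards [lt_mem_nhds one_pos] with t ht using hf t ht x

end IsPosHomogeneous

theorem isLittleO_taylor_two {f : E → F} {f' : E → E →L[ℝ] F} {f'' : E →L[ℝ] E →L[ℝ] F} {x₀ : E}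
    (hf : ∀ᶠ y in 𝓝 x₀, HasFDerivAt f (f' y) y) (hf' : HasStrictFDerivAt f' f'' x₀) :
    (fun p : E × E => f p.2 - f p.1 - f' p.1 (p.2 - p.1)
      - (1 / 2 : ℝ) • f'' (p.2 - p.1) (p.2 - p.1)) =o[𝓝 (x₀, x₀)] fun p => ‖p.2 - p.1‖ ^ 2 := by
  have symm := second_derivative_symmetric_of_eventually hf hf'.hasFDerivAt
  refine Asymptotics.isLittleO_iff.2 fun ε hε => ?_
  have close := Asymptotics.isLittleO_iff.1 hf'.isLittleO hε
  obtain ⟨r, hr, hball⟩ := Metric.eventually_nhds_iff_ball.1 ((hf.prod_inl_nhds x₀).and close)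
  rw [← ball_prod_same] at hball
  filter_upwards [prod_mem_nhds (ball_mem_nhds x₀ hr) (ball_mem_nhds x₀ hr)] with ⟨x, z⟩ ⟨hx, hz⟩
  set g : E → F := fun y => f y - f x - f' x (y - x) - (1 / 2 : ℝ) • f'' (y - x) (y - x)
  have segment_subset : segment ℝ x z ⊆ ball x₀ r := (convex_ball x₀ r).segment_subset hx hz
  have hg (y) (hy : y ∈ segment ℝ x z) :
      HasFDerivWithinAt g (f' y - f' x - f'' (y - x)) (segment ℝ x z) y := by
    have hsub : HasFDerivAt (fun y => y - x) (.id ℝ E) y := (hasFDerivAt_id y).sub_const x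
    have hquad := (f''.hasFDerivAt.comp y hsub).clm_apply hsub
    refine (((((hball (y, x) ⟨segment_subset hy, hx⟩).1.sub_const (f x)).sub
      ((f' x).hasFDerivAt.comp y hsub)).sub (hquad.const_smul (1 / 2 : ℝ))).congr_fderiv
        ?_).hasFDerivWithinAt
    ext w
    simp only [_root_.sub_apply, ContinuousLinearMap.comp_id, _root_.smul_apply,
      _root_.add_apply, ContinuousLinearMap.flip_apply, Function.comp_apply, symm w (y - x)]
    module
  have bound (y) (hy : y ∈ segment ℝ x z) : ‖f' y - f' x - f'' (y - x)‖ ≤ ε * ‖z - x‖ :=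
    (hball (y, x) ⟨segment_subset hy, hx⟩).2.trans
      (mul_le_mul_of_nonneg_left (norm_sub_le_of_mem_segment hy) hε.le)
  have := (convex_segment x z).norm_image_sub_le_of_norm_hasFDerivWithin_le hg bound
    (left_mem_segment ℝ x z) (right_mem_segment ℝ x z)
  simpa [g, sq, mul_assoc] using this

end Homogeneous

section Hessian

variable {E : Type*} [NormedAddCommGroup E] [InnerProductSpace ℝ E] [CompleteSpace E]
  {H : E → ℝ} {x : E}

/-- The Euclidean Hessian of `H` at `x` as an operator: the derivative of the gradient. -/
def hessianMap (H : E → ℝ) (x : E) : E →L[ℝ] E := fderiv ℝ (gradient H) x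

theorem gradient_eq_toDual_symm_comp_fderiv (H : E → ℝ) :
    gradient H = (InnerProductSpace.toDual ℝ E).symm ∘ fderiv ℝ H := rfl

theorem inner_hessianMap (H : E → ℝ) (x u v : E) :
    ⟪hessianMap H x u, v⟫ = fderiv ℝ (fderiv ℝ H) x u v := by
  rw [hessianMap, gradient_eq_toDual_symm_comp_fderiv, LinearIsometryEquiv.comp_fderiv]
  exact InnerProductSpace.toDual_symm_apply

theorem contDiffAt_gradient (hH : ContDiffAt ℝ 2 H x) : ContDiffAt ℝ 1 (gradient H) x :=
  (InnerProductSpace.toDual ℝ E).symm.contDiff.contDiffAt.comp x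
    (hH.fderiv_right one_add_one_eq_two.le)

theorem hasStrictFDerivAt_gradient (hH : ContDiffAt ℝ 2 H x) :
    HasStrictFDerivAt (gradient H) (hessianMap H x) x :=
  (contDiffAt_gradient hH).hasStrictFDerivAt one_ne_zero

theorem continuousAt_hessianMap (hH : ContDiffAt ℝ 2 H x) : ContinuousAt (hessianMap H) x :=
  ((contDiffAt_gradient hH).fderiv_right (m := 0) (zero_add 1).le).continuousAt

theorem inner_hessianMap_comm (hH : ContDiffAt ℝ 2 H x) (u v : E) :
    ⟪hessianMap H x u, v⟫ = ⟪u, hessianMap H x v⟫ := by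
  have symm := hH.isSymmSndFDerivAt (by simp only [minSmoothness_of_isRCLikeNormedField, le_refl])
  rw [real_inner_comm (hessianMap H x v), inner_hessianMap, inner_hessianMap, symm.eq u v]

theorem hasFDerivAt_innerSL_gradient (hH : DifferentiableAt ℝ H x) :
    HasFDerivAt H (innerSL ℝ (gradient H x)) x :=
  hH.hasGradientAt.hasFDerivAt

theorem isLittleO_taylor_two_gradient (hH : ContDiffAt ℝ 2 H x) :
    (fun p : E × E => H p.2 - H p.1 - ⟪gradient H p.1, p.2 - p.1⟫
      - 1 / 2 * ⟪hessianMap H x (p.2 - p.1), p.2 - p.1⟫) =o[𝓝 (x, x)] fun p => ‖p.2 - p.1‖ ^ 2 := by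
  have hderiv : ∀ᶠ y in 𝓝 x, HasFDerivAt H (fderiv ℝ H y) y := by
    filter_upwards [hH.eventually (by simp)] with y hy
    exact (hy.differentiableAt two_ne_zero).hasFDerivAt
  have hstrict : HasStrictFDerivAt (fderiv ℝ H) (fderiv ℝ (fderiv ℝ H) x) x :=
    (hH.fderiv_right one_add_one_eq_two.le).hasStrictFDerivAt one_ne_zero
  simpa only [inner_hessianMap, inner_gradient_left, smul_eq_mul]
    using isLittleO_taylor_two hderiv hstrict

theorem convexOn_univ_add_inner_gradient_le (hconv : ConvexOn ℝ Set.univ H)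
    (hH : DifferentiableAt ℝ H x) (y : E) : H x + ⟪gradient H x, y - x⟫ ≤ H y := by
  have along_line : HasDerivAt (fun t : ℝ => H (AffineMap.lineMap x y t))
      ⟪gradient H x, y - x⟫ 0 := by
    have hx : HasFDerivAt H (fderiv ℝ H x) (AffineMap.lineMap x y (0 : ℝ)) := by
      simpa using hH.hasFDerivAt
    simpa [Function.comp_def] using hx.comp_hasDerivAt 0 AffineMap.hasDerivAt_lineMap
  have slope := (hconv.comp_affineMap (AffineMap.lineMap x y)).le_slope_of_hasDerivAt
    (x := 0) (y := 1) (Set.mem_univ _) (Set.mem_univ _) one_pos along_line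
  have : ⟪gradient H x, y - x⟫ ≤ H y - H x := by simpa [slope_def_field] using slope
  linarith

namespace IsPosHomogeneous

variable {m : ℝ}

theorem gradient (hH : IsPosHomogeneous m H) : IsPosHomogeneous (m - 1) (gradient H) :=
  fun c hc x => by simp [gradient_eq_toDual_symm_comp_fderiv, hH.fderiv c hc]

theorem inner_gradient_self (hH : IsPosHomogeneous m H) (hx : DifferentiableAt ℝ H x) :
    ⟪_root_.gradient H x, x⟫ = m * H x := by
  simpa using hH.fderiv_apply_self hx

end IsPosHomogeneous

end Hessian

/-! ### Polar coordinates and the divergence theorem on the sphere -/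

section Polar

variable {E : Type*} [NormedAddCommGroup E] [NormedSpace ℝ E] [FiniteDimensional ℝ E]
  [MeasurableSpace E] [BorelSpace E]

theorem integrable_toSphere_of_continuousOn {G : Type*} [NormedAddCommGroup G] {μ : Measure E}
    [μ.IsAddHaarMeasure] {g : E → G} (hg : ContinuousOn g {0}ᶜ) :
    Integrable (fun x : sphere (0 : E) 1 => g x) μ.toSphere :=
  (hg.comp_continuous continuous_subtype_val ne_zero_of_mem_unit_sphere)
    |>.integrable_of_hasCompactSupport (.of_compactSpace _)

variable [Nontrivial E] (μ : Measure E) [μ.IsAddHaarMeasure]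

theorem integral_volumeIoiPow (n : ℕ) (g : ℝ → ℝ) :
    ∫ r, g r.1 ∂Measure.volumeIoiPow n = ∫ r in Set.Ioi (0 : ℝ), r ^ n * g r := by
  simp only [Measure.volumeIoiPow, ENNReal.ofReal]
  rw [integral_withDensity_eq_integral_smul (measurable_subtype_coe.pow_const _).real_toNNReal,
    integral_subtype_comap measurableSet_Ioi fun r => Real.toNNReal (r ^ n) • g r]
  refine setIntegral_congr_fun measurableSet_Ioi fun r hr => ?_
  simp [NNReal.smul_def, pow_nonneg (Set.mem_Ioi.1 hr).le]

theorem lintegral_eq_lintegral_sphere_prod (F : E → ℝ≥0∞) :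
    ∫⁻ z, F z ∂μ = ∫⁻ q : sphere (0 : E) 1 × Set.Ioi (0 : ℝ), F (q.2.1 • q.1.1)
      ∂μ.toSphere.prod (Measure.volumeIoiPow (Module.finrank ℝ E - 1)) := by
  have subtype := lintegral_subtype_comap (μ := μ) (measurableSet_singleton (0 : E)).compl F
  rw [restrict_compl_singleton] at subtype
  rw [← subtype, ← (μ.measurePreserving_homeomorphUnitSphereProd.symm
    (homeomorphUnitSphereProd E).toMeasurableEquiv).lintegral_comp_emb
    (homeomorphUnitSphereProd E).symm.measurableEmbedding]
  rfl

theorem integral_comp_norm_mul (χ : ℝ → ℝ) {m : ℝ} {g : E → ℝ} (hg : IsPosHomogeneous m g) :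
    ∫ z, χ ‖z‖ * g z ∂μ = (∫ x : sphere (0 : E) 1, g x ∂μ.toSphere) *
      ∫ r in Set.Ioi (0 : ℝ), χ r * r ^ (((Module.finrank ℝ E - 1 : ℕ) : ℝ) + m) := by
  set d := Module.finrank ℝ E - 1
  have radial : ∫ r in Set.Ioi (0 : ℝ), χ r * r ^ (d + m)
      = ∫ r, χ r.1 * r.1 ^ m ∂Measure.volumeIoiPow d := by
    rw [integral_volumeIoiPow d fun r => χ r * r ^ m]
    refine setIntegral_congr_fun measurableSet_Ioi fun r hr => ?_
    simp only [Real.rpow_add hr, Real.rpow_natCast]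
    ring
  have subtype := integral_subtype_comap (μ := μ) (measurableSet_singleton (0 : E)).compl
    fun z => χ ‖z‖ * g z
  rw [restrict_compl_singleton] at subtype
  rw [radial, ← integral_prod_mul, ← subtype,
    ← μ.measurePreserving_homeomorphUnitSphereProd.integral_comp
      (homeomorphUnitSphereProd E).measurableEmbedding]
  refine integral_congr_ae (.of_forall fun z => ?_)
  have z_pos : 0 < ‖z.1‖ := norm_pos_iff.2 z.2
  have z_eq : g z = ‖z.1‖ ^ m * g (‖z.1‖⁻¹ • z.1) := by
    rw [← smul_eq_mul, ← hg _ z_pos, smul_inv_smul₀ z_pos.ne']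
  simp only [homeomorphUnitSphereProd_apply_fst_coe, homeomorphUnitSphereProd_apply_snd_coe]
  rw [z_eq]
  ring

end Polar

section Divergence

variable {φ : ℝ → ℝ}

theorem contDiff_mul_rpow (hφ : ContDiff ℝ 1 φ) (hpos : tsupport φ ⊆ Set.Ioi 0) (s : ℝ) :
    ContDiff ℝ 1 fun r => φ r * r ^ s := by
  refine contDiff_iff_contDiffAt.2 fun r => ?_
  by_cases hr : r ∈ tsupport φ
  · exact hφ.contDiffAt.mul (Real.contDiffAt_rpow_const (Or.inl (hpos hr).ne'))
  · have vanishes : (fun r => φ r * r ^ s) =ᶠ[𝓝 r] fun _ => 0 := by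
      filter_upwards [notMem_tsupport_iff_eventuallyEq.1 hr] with y hy
      rw [hy, Pi.zero_apply, zero_mul]
    exact contDiffAt_const.congr_of_eventuallyEq vanishes

theorem integral_Ioi_deriv_mul_rpow (hφ : ContDiff ℝ 1 φ) (hc : HasCompactSupport φ)
    (hpos : tsupport φ ⊆ Set.Ioi 0) (s : ℝ) :
    ∫ r in Set.Ioi (0 : ℝ), deriv φ r * r ^ s
      = -(s * ∫ r in Set.Ioi (0 : ℝ), φ r * r ^ (s - 1)) := by
  have smooth := contDiff_mul_rpow hφ hpos s
  have integrable : IntegrableOn (fun r => s * (φ r * r ^ (s - 1))) (Set.Ioi 0) :=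
    ((contDiff_mul_rpow hφ hpos _).continuous.integrable_of_hasCompactSupport
      hc.mul_right).integrableOn.const_mul s
  have integrable_deriv : IntegrableOn (deriv fun r => φ r * r ^ s) (Set.Ioi 0) :=
    ((smooth.continuous_deriv le_rfl).integrable_of_hasCompactSupport
      hc.mul_right.deriv).integrableOn
  have leibniz : ∀ r ∈ Set.Ioi (0 : ℝ),
      deriv φ r * r ^ s = deriv (fun r => φ r * r ^ s) r - s * (φ r * r ^ (s - 1)) := by
    intro r hr
    have product := (hφ.differentiable one_ne_zero r).hasDerivAt.fun_mul
      (Real.hasDerivAt_rpow_const (p := s) (Or.inl (Set.mem_Ioi.1 hr).ne'))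
    rw [product.deriv]
    ring
  have φ_zero : φ 0 = 0 := image_eq_zero_of_notMem_tsupport fun h =>
    lt_irrefl (0 : ℝ) (hpos h)
  rw [setIntegral_congr_fun measurableSet_Ioi leibniz, integral_sub integrable_deriv integrable,
    hc.mul_right.integral_Ioi_deriv_eq smooth, φ_zero, integral_const_mul]
  ring

theorem exists_contDiff_bump_Ioi : ∃ φ : ℝ → ℝ, ContDiff ℝ 1 φ ∧ HasCompactSupport φ ∧
    tsupport φ ⊆ Set.Ioi 0 ∧ ∀ s : ℝ, 0 < ∫ r in Set.Ioi (0 : ℝ), φ r * r ^ s := by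
  let φ : ContDiffBump (2 : ℝ) := ⟨1 / 2, 1, by norm_num, by norm_num⟩
  have φ_pos : tsupport φ ⊆ Set.Ioi 0 := by
    intro r hr
    rw [φ.tsupport_eq, Real.closedBall_eq_Icc] at hr
    exact (show (0 : ℝ) < 2 - 1 by norm_num).trans_le hr.1
  refine ⟨φ, φ.contDiff, φ.hasCompactSupport, φ_pos, fun s => ?_⟩
  have vanishes : ∀ r ∉ Set.Ioi (0 : ℝ), φ r * r ^ s = 0 := fun r hr => by
    rw [image_eq_zero_of_notMem_tsupport fun h => hr (φ_pos h), zero_mul]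
  rw [setIntegral_eq_integral_of_forall_compl_eq_zero vanishes]
  refine (contDiff_mul_rpow φ.contDiff φ_pos s).continuous
    |>.integral_pos_of_hasCompactSupport_nonneg_nonzero φ.hasCompactSupport.mul_right
      (fun r => ?_) (x := 2) ?_
  · by_cases hr : r ∈ Set.Ioi (0 : ℝ)
    · exact mul_nonneg φ.nonneg (Real.rpow_nonneg (le_of_lt hr) s)
    · exact (vanishes r hr).ge
  · rw [φ.one_of_mem_closedBall (mem_closedBall_self φ.rIn_pos.le)]
    positivity

variable {E : Type*} [NormedAddCommGroup E]

theorem tsupport_comp_norm_subset (hpos : tsupport φ ⊆ Set.Ioi 0) :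
    tsupport (fun z : E => φ ‖z‖) ⊆ {0}ᶜ := fun _ hz =>
  norm_pos_iff.1 (hpos (tsupport_comp_subset_preimage φ continuous_norm hz))

variable [InnerProductSpace ℝ E]

theorem hasStrictFDerivAt_norm {x : E} (hx : x ≠ 0) :
    HasStrictFDerivAt (fun y : E => ‖y‖) (‖x‖⁻¹ • innerSL ℝ x) x := by
  have h := (hasStrictFDerivAt_norm_sq x).sqrt (by simpa using hx)
  simp only [Real.sqrt_sq (norm_nonneg _)] at h
  refine h.congr_fderiv ?_
  rw [← Nat.cast_smul_eq_nsmul ℝ, smul_smul]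
  congr 1
  field_simp
  simp

theorem hasFDerivAt_comp_norm (hφ : Differentiable ℝ φ) (hpos : tsupport φ ⊆ Set.Ioi 0) (z : E) :
    HasFDerivAt (fun z : E => φ ‖z‖) ((deriv φ ‖z‖ * ‖z‖⁻¹) • innerSL ℝ z) z := by
  rcases eq_or_ne z 0 with rfl | hz
  · have h0 : (0 : E) ∉ tsupport fun z : E => φ ‖z‖ :=
      fun h => tsupport_comp_norm_subset hpos h rfl
    simpa using (hasFDerivAt_const (0 : ℝ) (0 : E)).congr_of_eventuallyEq
      (notMem_tsupport_iff_eventuallyEq.1 h0)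
  · simpa [Function.comp_def, smul_smul] using
      (hφ ‖z‖).hasDerivAt.comp_hasFDerivAt z (hasStrictFDerivAt_norm hz).hasFDerivAt

variable [FiniteDimensional ℝ E] [MeasurableSpace E] [BorelSpace E]

theorem integrable_comp_norm_mul {μ : Measure E} [IsFiniteMeasureOnCompacts μ]
    (hφ : Continuous φ) (hc : HasCompactSupport φ) (hpos : tsupport φ ⊆ Set.Ioi 0) {g : E → ℝ}
    (hg : ContinuousOn g {0}ᶜ) : Integrable (fun z => φ ‖z‖ * g z) μ := by
  have cont : Continuous fun z => φ ‖z‖ * g z := by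
    refine continuous_of_tsupport fun z hz => ?_
    have hz0 := tsupport_comp_norm_subset hpos (tsupport_mul_subset_left hz)
    exact (hφ.comp continuous_norm).continuousAt.mul
      (hg.continuousAt (isOpen_compl_singleton.mem_nhds hz0))
  obtain ⟨R, hR⟩ := hc.isCompact.isBounded.subset_closedBall 0
  refine cont.integrable_of_hasCompactSupport (.intro (isCompact_closedBall 0 R) fun z hz => ?_)
  have φ_zero : φ ‖z‖ = 0 := image_eq_zero_of_notMem_tsupport fun h => hz (by simpa using hR h)
  rw [φ_zero, zero_mul]

variable {μ : Measure E} [μ.IsAddHaarMeasure]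

theorem integral_comp_norm_mul_fderiv_apply (hφ : ContDiff ℝ 1 φ) (hc : HasCompactSupport φ)
    (hpos : tsupport φ ⊆ Set.Ioi 0) {u : E → ℝ} (hu : ContDiffOn ℝ 1 u {0}ᶜ) (v : E) :
    ∫ z, φ ‖z‖ * fderiv ℝ u z v ∂μ = -∫ z, deriv φ ‖z‖ * (‖z‖⁻¹ * (u z * ⟪z, v⟫)) ∂μ := by
  have cutoff := hasFDerivAt_comp_norm (E := E) (hφ.differentiable one_ne_zero) hpos
  have cutoff_apply : ∀ z, fderiv ℝ (fun z : E => φ ‖z‖) z v * u z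
      = deriv φ ‖z‖ * (‖z‖⁻¹ * (u z * ⟪z, v⟫)) := fun z => by
    simp only [(cutoff z).fderiv, _root_.smul_apply, innerSL_apply_apply, smul_eq_mul]
    ring
  have cont_fderiv : ContinuousOn (fun z => fderiv ℝ u z v) {0}ᶜ :=
    (hu.continuousOn_fderiv_of_isOpen isOpen_compl_singleton le_rfl).clm_apply continuousOn_const
  have cont_cutoff : ContinuousOn (fun z : E => ‖z‖⁻¹ * (u z * ⟪z, v⟫)) {0}ᶜ :=
    (continuousOn_id.norm.inv₀ fun z hz => norm_ne_zero_iff.2 hz).mul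
      (hu.continuousOn.mul (by fun_prop))
  simp only [← cutoff_apply]
  refine integral_mul_fderiv_eq_neg_fderiv_mul_of_integrable ?_
    (integrable_comp_norm_mul hφ.continuous hc hpos cont_fderiv)
    (integrable_comp_norm_mul hφ.continuous hc hpos hu.continuousOn)
    (fun z _ => (cutoff z).differentiableAt) fun z hz => ?_
  · simp only [cutoff_apply]
    exact integrable_comp_norm_mul (hφ.continuous_deriv le_rfl) hc.deriv
      (tsupport_deriv_subset.trans hpos) cont_cutoff
  · exact (hu.contDiffAt (isOpen_compl_singleton.mem_nhds
      (tsupport_comp_norm_subset hpos hz))).differentiableAt one_ne_zero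

variable [Nontrivial E] {m : ℝ}

/- In polar coordinates both sides of `∫ φ(‖z‖) ∂ᵥu = -∫ u ∂ᵥ(φ(‖z‖))` are a spherical integral
times a radial one, and the radial factors differ by one integration by parts. -/
theorem integral_sphere_fderiv_apply {u : E → ℝ} (hu : ContDiffOn ℝ 1 u {0}ᶜ)
    (hm : IsPosHomogeneous m u) (v : E) :
    ∫ x : sphere (0 : E) 1, fderiv ℝ u x v ∂μ.toSphere
      = (((Module.finrank ℝ E - 1 : ℕ) : ℝ) + m)
        * ∫ x : sphere (0 : E) 1, u x * ⟪x.1, v⟫ ∂μ.toSphere := by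
  obtain ⟨φ, hφ, hc, hpos, hint⟩ := exists_contDiff_bump_Ioi
  have homog : IsPosHomogeneous m fun z => ‖z‖⁻¹ * (u z * ⟪z, v⟫) := fun c hc z => by
    simp only [norm_smul, Real.norm_of_nonneg hc.le, hm c hc, real_inner_smul_left, smul_eq_mul]
    field_simp
  have homog_fderiv : IsPosHomogeneous (m - 1) fun z => fderiv ℝ u z v := fun c hc z => by
    simp [hm.fderiv c hc z]
  have by_parts := integral_comp_norm_mul_fderiv_apply (μ := μ) hφ hc hpos hu v
  rw [integral_comp_norm_mul μ φ homog_fderiv, integral_comp_norm_mul μ _ homog,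
    integral_Ioi_deriv_mul_rpow hφ hc hpos, ← add_sub_assoc] at by_parts
  refine mul_right_cancel₀ (hint _).ne' (by_parts.trans ?_)
  simp only [norm_eq_of_mem_sphere]
  ring_nf

theorem integral_sphere_trace_fderiv {F : E → E} (hF : ContDiffOn ℝ 1 F {0}ᶜ)
    (hm : IsPosHomogeneous m F) :
    ∫ x : sphere (0 : E) 1, LinearMap.trace ℝ E (fderiv ℝ F x) ∂μ.toSphere
      = (((Module.finrank ℝ E - 1 : ℕ) : ℝ) + m)
        * ∫ x : sphere (0 : E) 1, ⟪F x, x.1⟫ ∂μ.toSphere := by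
  let b := stdOrthonormalBasis ℝ E
  have component_smooth : ∀ i, ContDiffOn ℝ 1 (fun z => ⟪b i, F z⟫) {0}ᶜ := fun i =>
    contDiffOn_const.inner ℝ hF
  have component_homog : ∀ i, IsPosHomogeneous m fun z => ⟪b i, F z⟫ := fun i c hc z => by
    simp only [hm c hc, real_inner_smul_right, smul_eq_mul]
  have component_fderiv : ∀ (x : sphere (0 : E) 1) i,
      ⟪b i, fderiv ℝ F x (b i)⟫ = fderiv ℝ (fun z => ⟪b i, F z⟫) x (b i) := fun x i => by
    have hx : DifferentiableAt ℝ F x :=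
      (hF.contDiffAt (isOpen_compl_singleton.mem_nhds (ne_zero_of_mem_unit_sphere x)))
        |>.differentiableAt one_ne_zero
    simp [fderiv_inner_apply ℝ (differentiableAt_const (b i)) hx]
  have expand : ∀ x : sphere (0 : E) 1, ⟪F x, x.1⟫ = ∑ i, ⟪b i, F x⟫ * ⟪x.1, b i⟫ := fun x => by
    rw [← b.sum_inner_mul_inner (F x)]
    exact Finset.sum_congr rfl fun i _ => by rw [real_inner_comm, real_inner_comm x.1]
  simp only [LinearMap.trace_eq_sum_inner _ b, ContinuousLinearMap.coe_coe, component_fderiv,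
    expand]
  rw [integral_finsetSum, integral_finsetSum, Finset.mul_sum]
  · exact Finset.sum_congr rfl fun i _ =>
      integral_sphere_fderiv_apply (component_smooth i) (component_homog i) (b i)
  · exact fun i _ => integrable_toSphere_of_continuousOn (g := fun x => ⟪b i, F x⟫ * ⟪x, b i⟫)
      ((component_smooth i).continuousOn.mul (by fun_prop))
  · exact fun i _ => integrable_toSphere_of_continuousOn
      (((component_smooth i).continuousOn_fderiv_of_isOpen
        isOpen_compl_singleton le_rfl).clm_apply continuousOn_const)

end Divergence

/-! ### Regular support functions -/

section LinearAlgebra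

theorem det_add_smulRight_of_comp_eq_smul {k V : Type*} [Field k] [AddCommGroup V] [Module k V]
    [FiniteDimensional k V] {T : V →ₗ[k] V} {f : Module.Dual k V} {c : k} (hc : c ≠ 0)
    (hT : f ∘ₗ T = c • f) {v : V} (hv : f v = 0) :
    LinearMap.det (T + f.smulRight v) = LinearMap.det T := by
  have factor : T + f.smulRight v = LinearMap.transvection f (c⁻¹ • v) ∘ₗ T := by
    ext u
    have hu : f (T u) = c * f u := LinearMap.congr_fun hT u
    simp [LinearMap.transvection.apply, hu, smul_smul, mul_comm c, hc]
  simp [factor, LinearMap.det_comp, LinearMap.transvection.det, hv]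

theorem exists_pos_mul_norm_sq_le_inner {E : Type*} [NormedAddCommGroup E] [InnerProductSpace ℝ E]
    [FiniteDimensional ℝ E] [Nontrivial E] (T : E →L[ℝ] E) (hT : ∀ u, u ≠ 0 → 0 < ⟪T u, u⟫) :
    ∃ c > 0, ∀ u, c * ‖u‖ ^ 2 ≤ ⟪T u, u⟫ := by
  have cont : Continuous fun u => ⟪T u, u⟫ := by fun_prop
  obtain ⟨z, hz, hmin⟩ := (isCompact_sphere (0 : E) 1).exists_isMinOn
    (NormedSpace.sphere_nonempty.2 zero_le_one) cont.continuousOn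
  refine ⟨⟪T z, z⟫, hT z (ne_zero_of_mem_unit_sphere ⟨z, hz⟩), fun u => ?_⟩
  rcases eq_or_ne u 0 with rfl | hu
  · simp
  have hu_unit : ‖u‖⁻¹ • u ∈ sphere (0 : E) 1 := by simp [norm_smul, hu]
  calc ⟪T z, z⟫ * ‖u‖ ^ 2 ≤ ⟪T (‖u‖⁻¹ • u), ‖u‖⁻¹ • u⟫ * ‖u‖ ^ 2 := by
        gcongr
        exact hmin hu_unit
    _ = ⟪T u, u⟫ := by
        simp only [map_smul, real_inner_smul_left, real_inner_smul_right]
        have := norm_ne_zero_iff.2 hu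
        field_simp

end LinearAlgebra

/-- `H` is the positively homogeneous extension of the support function of a convex body with
`C²` boundary of positive curvature and the origin in its interior; positive curvature is
positive definiteness of `bmat n H`, i.e. of `∇̄²h + h ḡ`. -/
structure IsRegularSupportFunction (n : ℕ) (H : Euc n → ℝ) : Prop where
  homogeneous : IsPosHomogeneous 1 H
  convexOn : ConvexOn ℝ Set.univ H
  contDiffOn : ContDiffOn ℝ 2 H {0}ᶜ
  pos_of_mem_sphere : ∀ x ∈ sphere (0 : Euc n) 1, 0 < H x
  posDef_bmat : ∀ x ∈ sphere (0 : Euc n) 1, (bmat n H x).PosDef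

theorem inv_norm_smul_mem_sphere {E : Type*} [NormedAddCommGroup E] [NormedSpace ℝ E] {z : E}
    (hz : z ≠ 0) : ‖z‖⁻¹ • z ∈ sphere (0 : E) 1 := by
  simp [norm_smul, hz]

/-- The endomorphism of `ℝ^{n+1}` whose matrix at `x` is `bmat n H x`: for `‖x‖ = 1` it is
`∇̄²h + h ḡ` on the tangent space `x^⊥` and multiplication by `h` on the normal line. -/
def bmatMap {n : ℕ} (H : Euc n → ℝ) (x : Euc n) : Euc n →L[ℝ] Euc n :=
  hessianMap H x + H x • (innerSL ℝ x).smulRight x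

theorem bmatMap_apply {n : ℕ} (H : Euc n → ℝ) (x u : Euc n) :
    bmatMap H x u = hessianMap H x u + (H x * ⟪x, u⟫) • x := by
  simp [bmatMap, smul_smul]

theorem toEuclideanLin_bmat {n : ℕ} {H : Euc n → ℝ} {x : Euc n} (hH : ContDiffAt ℝ 2 H x) :
    (bmat n H x).toEuclideanLin = (bmatMap H x : Euc n →ₗ[ℝ] Euc n) := by
  have hess : ∀ i j, ehess n H x i j
      = ⟪hessianMap H x (EuclideanSpace.single i 1), EuclideanSpace.single j 1⟫ := fun i j => by
    rw [inner_hessianMap]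
    have hd : DifferentiableAt ℝ (fderiv ℝ H) x :=
      (hH.fderiv_right one_add_one_eq_two.le).differentiableAt one_ne_zero
    simp [ehess, fderiv_clm_apply hd (differentiableAt_const _)]
  refine LinearMap.ext fun u => ?_
  ext i
  have row : (hessianMap H x u) i = ∑ j, ehess n H x i j * u j := by
    have expand : hessianMap H x (EuclideanSpace.single i 1)
        = ∑ j, ehess n H x i j • EuclideanSpace.single j (1 : ℝ) := by
      ext k
      simp [hess, EuclideanSpace.inner_single_right, Pi.single_apply]
    calc (hessianMap H x u) i = ⟪EuclideanSpace.single i 1, hessianMap H x u⟫ := by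
          simp [EuclideanSpace.inner_single_left]
      _ = ∑ j, ehess n H x i j * u j := by
          rw [← inner_hessianMap_comm hH, expand, sum_inner]
          simp [real_inner_smul_left, EuclideanSpace.inner_single_left]
  simp only [ContinuousLinearMap.coe_coe, bmatMap_apply, Matrix.toLpLin_apply, mulVec, dotProduct,
    bmat, Matrix.add_apply, Matrix.of_apply,
    add_mul, Finset.sum_add_distrib, PiLp.add_apply, PiLp.smul_apply, row, smul_eq_mul,
    PiLp.inner_apply, Finset.mul_sum, Finset.sum_mul]
  refine congrArg _ (Finset.sum_congr rfl fun j _ => ?_)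
  simp
  ring

namespace IsRegularSupportFunction

variable {n : ℕ} {H : Euc n → ℝ} {x z : Euc n}

theorem contDiffAt (hH : IsRegularSupportFunction n H) (hx : x ≠ 0) : ContDiffAt ℝ 2 H x :=
  hH.contDiffOn.contDiffAt (isOpen_compl_singleton.mem_nhds hx)

theorem differentiableAt (hH : IsRegularSupportFunction n H) (hx : x ≠ 0) :
    DifferentiableAt ℝ H x :=
  (hH.contDiffAt hx).differentiableAt two_ne_zero

theorem pos (hH : IsRegularSupportFunction n H) (hx : x ≠ 0) : 0 < H x := by
  have h := hH.pos_of_mem_sphere _ (inv_norm_smul_mem_sphere hx)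
  rw [hH.homogeneous _ (inv_pos.2 (norm_pos_iff.2 hx)), Real.rpow_one] at h
  exact pos_of_mul_pos_right h (by positivity)

theorem gradient_smul (hH : IsRegularSupportFunction n H) {c : ℝ} (hc : 0 < c) (x : Euc n) :
    gradient H (c • x) = gradient H x := by
  simpa using hH.homogeneous.gradient c hc x

theorem inner_gradient_self (hH : IsRegularSupportFunction n H) (hx : x ≠ 0) :
    ⟪gradient H x, x⟫ = H x := by
  simpa only [one_mul] using hH.homogeneous.inner_gradient_self (hH.differentiableAt hx)

theorem gradient_ne_zero (hH : IsRegularSupportFunction n H) (hx : x ≠ 0) :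
    gradient H x ≠ 0 := fun h => by
  have := hH.inner_gradient_self hx
  rw [h, inner_zero_left] at this
  exact (hH.pos hx).ne this

theorem inner_gradient_le (hH : IsRegularSupportFunction n H) (hx : x ≠ 0) (z : Euc n) :
    ⟪gradient H x, z⟫ ≤ H z := by
  have h := convexOn_univ_add_inner_gradient_le hH.convexOn (hH.differentiableAt hx) z
  rw [inner_sub_right, hH.inner_gradient_self hx] at h
  linarith

theorem hessianMap_self (hH : IsRegularSupportFunction n H) (hx : x ≠ 0) :
    hessianMap H x x = 0 := by
  have h := hH.homogeneous.gradient.fderiv_apply_self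
    (hasStrictFDerivAt_gradient (hH.contDiffAt hx)).differentiableAt
  simpa [hessianMap] using h

theorem inner_hessianMap_sub_smul (hH : IsRegularSupportFunction n H) (hx : x ≠ 0)
    (u : Euc n) (a : ℝ) :
    ⟪hessianMap H x (u - a • x), u - a • x⟫ = ⟪hessianMap H x u, u⟫ := by
  rw [map_sub, map_smul, hH.hessianMap_self hx, smul_zero, sub_zero, inner_sub_right,
    real_inner_smul_right, inner_hessianMap_comm (hH.contDiffAt hx) u x, hH.hessianMap_self hx,
    inner_zero_right, mul_zero, sub_zero]

theorem inner_bmatMap_self_pos (hH : IsRegularSupportFunction n H)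
    (hx : x ∈ sphere (0 : Euc n) 1) {u : Euc n} (hu : u ≠ 0) : 0 < ⟪bmatMap H x u, u⟫ := by
  have pos := (hH.posDef_bmat x hx).dotProduct_mulVec_pos (x := u.ofLp) (by simpa using hu)
  rw [← ContinuousLinearMap.coe_coe,
    ← toEuclideanLin_bmat (hH.contDiffAt (ne_zero_of_mem_unit_sphere ⟨x, hx⟩))]
  simpa [Matrix.toLpLin_apply, PiLp.inner_apply, dotProduct] using pos

theorem exists_pos_mul_norm_sq_le_inner_hessianMap (hH : IsRegularSupportFunction n H)
    (hx : x ∈ sphere (0 : Euc n) 1) :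
    ∃ c > 0, ∀ u, c * ‖u - ⟪x, u⟫ • x‖ ^ 2 ≤ ⟪hessianMap H x u, u⟫ := by
  obtain ⟨c, hc, coercive⟩ := exists_pos_mul_norm_sq_le_inner (bmatMap H x)
    fun u hu => hH.inner_bmatMap_self_pos hx hu
  refine ⟨c, hc, fun u => (coercive (u - ⟪x, u⟫ • x)).trans_eq ?_⟩
  have tangential : ⟪x, u - ⟪x, u⟫ • x⟫ = 0 := by
    simp [inner_sub_right, real_inner_smul_right, norm_eq_of_mem_sphere ⟨x, hx⟩]
  rw [bmatMap_apply, tangential, mul_zero, zero_smul, add_zero,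
    hH.inner_hessianMap_sub_smul (ne_zero_of_mem_unit_sphere ⟨x, hx⟩)]

theorem gradient_eq_of_inner_gradient_eq (hH : IsRegularSupportFunction n H) (hx : x ≠ 0)
    (hz : z ≠ 0) (h : ⟪gradient H x, z⟫ = H z) : gradient H z = gradient H x := by
  have hmin : IsLocalMin (fun y => H y - ⟪gradient H x, y⟫) z := .of_forall fun y => by
    have := hH.inner_gradient_le hx y
    linarith
  have hderiv := (hH.differentiableAt hz).hasGradientAt.hasFDerivAt.sub
    (innerSL ℝ (gradient H x)).hasFDerivAt
  have := hmin.hasFDerivAt_eq_zero hderiv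
  exact ext_inner_right ℝ fun u => sub_eq_zero.1 (by simpa using congr($this u))

theorem hessianMap_sub_eq_zero (hH : IsRegularSupportFunction n H) (hx : x ≠ 0)
    (h : ⟪gradient H x, z⟫ = H z) : hessianMap H x (z - x) = 0 := by
  let γ : ℝ → Euc n := AffineMap.lineMap x z
  have γ_zero : γ 0 = x := AffineMap.lineMap_apply_zero x z
  have γ_deriv : HasDerivAt γ (z - x) 0 := AffineMap.hasDerivAt_lineMap
  have γ_ne : ∀ᶠ t in 𝓝[≥] (0 : ℝ), γ t ≠ 0 := nhdsWithin_le_nhds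
    (γ_deriv.continuousAt.eventually_ne (by rwa [γ_zero]))
  have equality : ∀ t ∈ Set.Icc (0 : ℝ) 1, ⟪gradient H x, γ t⟫ = H (γ t) := fun t ht => by
    refine (hH.inner_gradient_le hx _).antisymm ?_
    have segment : γ t = (1 - t) • x + t • z := AffineMap.lineMap_apply_module x z t
    calc H (γ t) ≤ (1 - t) • H x + t • H z := segment ▸
          hH.convexOn.2 (Set.mem_univ x) (Set.mem_univ z) (sub_nonneg.2 ht.2) ht.1 (by ring)
      _ = ⟪gradient H x, γ t⟫ := by
          rw [segment, inner_add_right, real_inner_smul_right, real_inner_smul_right,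
            hH.inner_gradient_self hx, h, smul_eq_mul, smul_eq_mul]
  have constant : (fun t => gradient H (γ t)) =ᶠ[𝓝[≥] 0] fun _ => gradient H x := by
    filter_upwards [γ_ne, Icc_mem_nhdsGE zero_lt_one] with t ht ht'
    exact hH.gradient_eq_of_inner_gradient_eq hx ht (equality t ht')
  have deriv : HasDerivAt (fun t => gradient H (γ t)) (hessianMap H x (z - x)) 0 :=
    (γ_zero ▸ (hasStrictFDerivAt_gradient (hH.contDiffAt hx)).hasFDerivAt :
      HasFDerivAt (gradient H) (hessianMap H x) (γ 0)).comp_hasDerivAt 0 γ_deriv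
  exact (uniqueDiffWithinAt_Ici 0).eq_deriv _ deriv.hasDerivWithinAt
    ((hasDerivWithinAt_const _ _ _).congr_of_eventuallyEq constant (by simp [γ_zero]))

theorem eq_inner_smul_of_hessianMap_eq_zero (hH : IsRegularSupportFunction n H)
    (hx : x ∈ sphere (0 : Euc n) 1) {u : Euc n} (hu : hessianMap H x u = 0) :
    u = ⟪x, u⟫ • x := by
  obtain ⟨c, hc, coercive⟩ := hH.exists_pos_mul_norm_sq_le_inner_hessianMap hx
  have h := coercive u
  rw [hu, inner_zero_left] at h
  have : ‖u - ⟪x, u⟫ • x‖ ^ 2 ≤ 0 := nonpos_of_mul_nonpos_right h hc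
  exact sub_eq_zero.1 (norm_eq_zero.1 (by nlinarith [norm_nonneg (u - ⟪x, u⟫ • x)]))

theorem inner_gradient_lt (hH : IsRegularSupportFunction n H) (hx : x ∈ sphere (0 : Euc n) 1)
    (hz : z ∈ sphere (0 : Euc n) 1) (hxz : x ≠ z) : ⟪gradient H x, z⟫ < H z := by
  have hx0 : x ≠ 0 := ne_zero_of_mem_unit_sphere ⟨x, hx⟩
  have norm_x : ‖x‖ = 1 := norm_eq_of_mem_sphere ⟨x, hx⟩
  refine (hH.inner_gradient_le hx0 z).lt_of_ne fun heq => hxz ?_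
  have parallel : z = ⟪x, z⟫ • x := by
    have := hH.eq_inner_smul_of_hessianMap_eq_zero hx (hH.hessianMap_sub_eq_zero hx0 heq)
    rwa [inner_sub_right, real_inner_self_eq_norm_sq, norm_x, one_pow, sub_smul, one_smul,
      sub_left_inj] at this
  have abs_eq_one : |⟪x, z⟫| = 1 := by
    have := congrArg norm parallel
    rw [norm_smul, norm_x, norm_eq_of_mem_sphere ⟨z, hz⟩, mul_one, Real.norm_eq_abs] at this
    exact this.symm
  have nonneg : 0 ≤ ⟪x, z⟫ := by
    have : H z = ⟪x, z⟫ * H x := by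
      rw [← heq, parallel, real_inner_smul_right, hH.inner_gradient_self hx0, ← parallel]
    exact (pos_of_mul_pos_left (this ▸ hH.pos_of_mem_sphere z hz)
      (hH.pos_of_mem_sphere x hx).le).le
  rw [parallel, ← abs_of_nonneg nonneg, abs_eq_one, one_smul]

end IsRegularSupportFunction

/-! ### Brunn–Minkowski for star-shaped perturbations of the body -/

theorem volume_mul_volume_le_sq {n : ℕ} {A B C : Set (EuclideanSpace ℝ (Fin n))}
    (hA : MeasurableSet A) (hB : MeasurableSet B) (hC : MeasurableSet C)
    (h : ∀ x ∈ A, ∀ y ∈ B, (1 / 2 : ℝ) • x + (1 / 2 : ℝ) • y ∈ C) :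
    volume A * volume B ≤ volume C ^ 2 := by
  have square (t : ℝ≥0∞) : (t ^ (1 / 2 : ℝ)) ^ 2 = t := by
    rw [← ENNReal.rpow_natCast, ← ENNReal.rpow_mul]
    norm_num
  have bm := brunn_minkowski one_half_pos one_half_pos (add_halves 1) hA hB hC h
  simpa only [mul_pow, square] using pow_le_pow_left' bm 2

section StarRegion

variable {E : Type*} [NormedAddCommGroup E] [NormedSpace ℝ E]

/-- The punctured open star-shaped region with radial function `l` on the unit sphere. -/
def starRegion (l : E → ℝ) : Set E := {z | z ≠ 0 ∧ ‖z‖ < l (‖z‖⁻¹ • z)}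

theorem smul_mem_starRegion_iff {l : E → ℝ} {r : ℝ} (hr : 0 < r) {x : E}
    (hx : x ∈ sphere (0 : E) 1) : r • x ∈ starRegion l ↔ r < l x := by
  have norm_smul_x : ‖r • x‖ = r := by
    rw [norm_smul, norm_eq_of_mem_sphere ⟨x, hx⟩, Real.norm_of_nonneg hr.le, mul_one]
  simp [starRegion, norm_smul_x, smul_smul, hr.ne', ne_zero_of_mem_unit_sphere ⟨x, hx⟩]

theorem isOpen_starRegion {l : E → ℝ} (hl : ContinuousOn l (sphere 0 1)) :
    IsOpen (starRegion l) := by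
  have direction : ContinuousOn (fun z : E => ‖z‖⁻¹ • z) {0}ᶜ :=
    (continuous_norm.continuousOn.inv₀ fun z hz => norm_ne_zero_iff.2 hz).smul continuousOn_id
  have gap : ContinuousOn (fun z : E => l (‖z‖⁻¹ • z) - ‖z‖) {0}ᶜ :=
    (hl.comp direction fun z hz => inv_norm_smul_mem_sphere hz).sub continuous_norm.continuousOn
  convert gap.isOpen_inter_preimage isOpen_compl_singleton (isOpen_Ioi (a := (0 : ℝ))) using 1
  ext z
  simp [starRegion]

theorem setLIntegral_starRegion [FiniteDimensional ℝ E] [Nontrivial E] [MeasurableSpace E]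
    [BorelSpace E] (μ : Measure E) [μ.IsAddHaarMeasure] {l : E → ℝ}
    (hl : ContinuousOn l (sphere 0 1)) (hl0 : ∀ x ∈ sphere (0 : E) 1, 0 < l x) {g : E → ℝ≥0∞}
    (hg : Measurable fun x : sphere (0 : E) 1 => g x) :
    ∫⁻ z in starRegion l, g (‖z‖⁻¹ • z) ∂μ = ∫⁻ x : sphere (0 : E) 1,
      g x * ENNReal.ofReal (l x ^ Module.finrank ℝ E / Module.finrank ℝ E) ∂μ.toSphere := by
  have dim : Module.finrank ℝ E - 1 + 1 = Module.finrank ℝ E :=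
    Nat.sub_add_cancel Module.finrank_pos
  have hl_sphere : Continuous fun x : sphere (0 : E) 1 => l x :=
    continuousOn_iff_continuous_domRestrict.1 hl
  let S := {q : sphere (0 : E) 1 × Set.Ioi (0 : ℝ) | q.2.1 < l q.1}
  have polar (q : sphere (0 : E) 1 × Set.Ioi (0 : ℝ)) :
      (starRegion l).indicator (fun z => g (‖z‖⁻¹ • z)) (q.2.1 • q.1.1)
        = S.indicator (fun q => g q.1) q := by
    obtain ⟨x, r, hr : 0 < r⟩ := q
    have unit : ‖r • x.1‖⁻¹ • r • x.1 = x := by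
      simp [norm_smul, abs_of_pos hr, smul_smul, hr.ne']
    have mem := smul_mem_starRegion_iff (l := l) hr x.2
    by_cases hlt : r < l x
    · rw [Set.indicator_of_mem (mem.2 hlt), Set.indicator_of_mem (by exact hlt), unit]
    · rw [Set.indicator_of_notMem (mt mem.1 hlt), Set.indicator_of_notMem (by exact hlt)]
  have measurable : Measurable (S.indicator fun q => g q.1) :=
    (hg.comp measurable_fst).indicator (measurableSet_lt
      (measurable_subtype_coe.comp measurable_snd) (hl_sphere.measurable.comp measurable_fst))
  rw [← lintegral_indicator (isOpen_starRegion hl).measurableSet,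
    lintegral_eq_lintegral_sphere_prod]
  simp_rw [polar]
  rw [lintegral_prod _ measurable.aemeasurable]
  refine lintegral_congr fun x => ?_
  calc ∫⁻ r, S.indicator (fun q => g q.1) (x, r) ∂Measure.volumeIoiPow (Module.finrank ℝ E - 1)
      = ∫⁻ _ in Set.Iio (⟨l x, hl0 x x.2⟩ : Set.Ioi (0 : ℝ)), g x
          ∂Measure.volumeIoiPow (Module.finrank ℝ E - 1) := by
        rw [← lintegral_indicator measurableSet_Iio]
        rfl
    _ = g x * ENNReal.ofReal (l x ^ Module.finrank ℝ E / Module.finrank ℝ E) := by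
        rw [setLIntegral_const, Measure.volumeIoiPow_apply_Iio, dim]
        norm_cast
        simp [dim]

end StarRegion

/-- The cone map `z ↦ ‖z‖ X(z/‖z‖)` over the inverse Gauss map `X = ∇H`: the boundary of the body
with support function `H` is the image of the unit sphere. -/
def gaussCone {n : ℕ} (H : Euc n → ℝ) (z : Euc n) : Euc n := ‖z‖ • gradient H z

namespace IsRegularSupportFunction

variable {n : ℕ} {H : Euc n → ℝ} {x z : Euc n}

theorem volDens_eq_det_bmatMap (hH : IsRegularSupportFunction n H) (hx : x ≠ 0) :
    volDens n H x = (bmatMap H x).det := by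
  rw [volDens, sigman, mul_div_cancel₀ _ (hH.pos hx).ne', ContinuousLinearMap.det,
    ← toEuclideanLin_bmat (hH.contDiffAt hx), LinearMap.det_toLpLin]

theorem volDens_pos (hH : IsRegularSupportFunction n H) (hx : x ∈ sphere (0 : Euc n) 1) :
    0 < volDens n H x := by
  rw [volDens, sigman, mul_div_cancel₀ _ (hH.pos_of_mem_sphere x hx).ne']
  exact (hH.posDef_bmat x hx).det_pos

theorem continuousOn_gradient (hH : IsRegularSupportFunction n H) :
    ContinuousOn (gradient H) {0}ᶜ := fun _ hx =>
  (contDiffAt_gradient (hH.contDiffAt hx)).continuousAt.continuousWithinAt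

theorem continuousOn_hessianMap (hH : IsRegularSupportFunction n H) :
    ContinuousOn (hessianMap H) {0}ᶜ := fun _ hx =>
  (continuousAt_hessianMap (hH.contDiffAt hx)).continuousWithinAt

theorem continuousOn_volDens (hH : IsRegularSupportFunction n H) :
    ContinuousOn (volDens n H) {0}ᶜ := by
  have cont_normal : Continuous fun x : Euc n => (innerSL ℝ x).smulRight x :=
    ((ContinuousLinearMap.smulRightL ℝ (Euc n) (Euc n)).continuous.comp
      (innerSL ℝ).continuous).clm_apply continuous_id
  have cont_bmatMap : ContinuousOn (bmatMap H) {0}ᶜ :=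
    hH.continuousOn_hessianMap.add (hH.contDiffOn.continuousOn.smul cont_normal.continuousOn)
  exact (ContinuousLinearMap.continuous_det.comp_continuousOn cont_bmatMap).congr
    fun x hx => hH.volDens_eq_det_bmatMap hx

theorem hasFDerivAt_gaussCone (hH : IsRegularSupportFunction n H) (hz : z ≠ 0) :
    HasFDerivAt (gaussCone H)
      (‖z‖ • hessianMap H z + (‖z‖⁻¹ • innerSL ℝ z).smulRight (gradient H z)) z :=
  (hasStrictFDerivAt_norm hz).hasFDerivAt.smul
    (hasStrictFDerivAt_gradient (hH.contDiffAt hz)).hasFDerivAt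

theorem fderiv_gaussCone_eq (hH : IsRegularSupportFunction n H) (hz : z ≠ 0) :
    fderiv ℝ (gaussCone H) z = fderiv ℝ (gaussCone H) (‖z‖⁻¹ • z) := by
  have hom : IsPosHomogeneous 1 (gaussCone H) := fun c hc z => by
    simp [gaussCone, hH.gradient_smul hc, norm_smul, abs_of_pos hc, smul_smul]
  simpa using (hom.fderiv ‖z‖⁻¹ (inv_pos.2 (norm_pos_iff.2 hz)) z).symm

theorem det_fderiv_gaussCone (hH : IsRegularSupportFunction n H)
    (hx : x ∈ sphere (0 : Euc n) 1) : (fderiv ℝ (gaussCone H) x).det = volDens n H x := by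
  have hx0 : x ≠ 0 := ne_zero_of_mem_unit_sphere ⟨x, hx⟩
  have norm_x : ‖x‖ = 1 := norm_eq_of_mem_sphere ⟨x, hx⟩
  let normal : Module.Dual ℝ (Euc n) := innerSL ℝ x
  have normal_comp : normal ∘ₗ (bmatMap H x : Euc n →ₗ[ℝ] Euc n) = H x • normal := by
    refine LinearMap.ext fun u => ?_
    change ⟪x, bmatMap H x u⟫ = H x * ⟪x, u⟫
    rw [bmatMap_apply, inner_add_right, ← inner_hessianMap_comm (hH.contDiffAt hx0),
      hH.hessianMap_self hx0, inner_zero_left, zero_add, real_inner_smul_right,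
      real_inner_self_eq_norm_sq, norm_x, one_pow, mul_one]
  have normal_tangential : normal (gradient H x - H x • x) = 0 := by
    change ⟪x, gradient H x - H x • x⟫ = 0
    rw [inner_sub_right, real_inner_comm, hH.inner_gradient_self hx0, real_inner_smul_right,
      real_inner_self_eq_norm_sq, norm_x, one_pow, mul_one, sub_self]
  have split : (fderiv ℝ (gaussCone H) x : Euc n →ₗ[ℝ] Euc n)
      = bmatMap H x + normal.smulRight (gradient H x - H x • x) := by
    rw [(hH.hasFDerivAt_gaussCone hx0).fderiv, norm_x]
    refine LinearMap.ext fun u => ?_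
    change (1 : ℝ) • hessianMap H x u + ((1 : ℝ)⁻¹ • ⟪x, u⟫) • gradient H x
      = bmatMap H x u + ⟪x, u⟫ • (gradient H x - H x • x)
    rw [bmatMap_apply]
    module
  rw [hH.volDens_eq_det_bmatMap hx0, ContinuousLinearMap.det, split,
    det_add_smulRight_of_comp_eq_smul (hH.pos hx0).ne' normal_comp normal_tangential,
    ContinuousLinearMap.det]

theorem injOn_gaussCone (hH : IsRegularSupportFunction n H) : Set.InjOn (gaussCone H) {0}ᶜ := by
  have norm_le {z w : Euc n} (hz : z ≠ 0) (hw : w ≠ 0) (h : gaussCone H z = gaussCone H w) :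
      ‖z‖ ≤ ‖w‖ := by
    refine le_of_mul_le_mul_right ?_ (hH.pos hz)
    calc ‖z‖ * H z = ‖w‖ * ⟪gradient H w, z⟫ := by
          have := congrArg (fun y => ⟪y, z⟫) h
          simpa only [gaussCone, real_inner_smul_left, hH.inner_gradient_self hz] using this
      _ ≤ ‖w‖ * H z := by
          gcongr
          exact hH.inner_gradient_le hw z
  intro z (hz : z ≠ 0) w (hw : w ≠ 0) h
  have hw_inv : 0 < ‖w‖⁻¹ := inv_pos.2 (norm_pos_iff.2 hw)
  have norm_eq : ‖z‖ = ‖w‖ := (norm_le hz hw h).antisymm (norm_le hw hz h.symm)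
  have gradient_eq : gradient H z = gradient H w := by
    rw [gaussCone, gaussCone, norm_eq] at h
    exact smul_right_injective _ (norm_ne_zero_iff.2 hw) h
  refine smul_right_injective _ hw_inv.ne' ?_
  by_contra hne
  have hlt := hH.inner_gradient_lt (norm_eq ▸ inv_norm_smul_mem_sphere hz)
    (inv_norm_smul_mem_sphere hw) hne
  rw [hH.gradient_smul hw_inv, gradient_eq, ← hH.gradient_smul hw_inv w,
    hH.inner_gradient_self (smul_ne_zero hw_inv.ne' hw)] at hlt
  exact hlt.false

/- Maximize `⟪y, z⟫ / H z` over directions `z`. -/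
theorem exists_eq_smul_gradient (hH : IsRegularSupportFunction n H) {y : Euc n} (hy : y ≠ 0) :
    ∃ x ∈ sphere (0 : Euc n) 1, ∃ r : ℝ, 0 < r ∧ y = r • gradient H x := by
  have cont : ContinuousOn (fun z => ⟪y, z⟫ / H z) (sphere (0 : Euc n) 1) :=
    ContinuousOn.div (by fun_prop) (fun z hz => (hH.contDiffAt
      (ne_zero_of_mem_unit_sphere ⟨z, hz⟩)).continuousAt.continuousWithinAt)
      fun z hz => (hH.pos_of_mem_sphere z hz).ne'
  obtain ⟨x, hx, hmax⟩ := (isCompact_sphere (0 : Euc n) 1).exists_isMaxOn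
    ⟨_, inv_norm_smul_mem_sphere hy⟩ cont
  have hx0 : x ≠ 0 := ne_zero_of_mem_unit_sphere ⟨x, hx⟩
  set r := ⟪y, x⟫ / H x with hr
  have inner_le {z : Euc n} (hz : z ≠ 0) : ⟪y, z⟫ ≤ r * H z := by
    have hz_inv : 0 < ‖z‖⁻¹ := inv_pos.2 (norm_pos_iff.2 hz)
    have h : ⟪y, ‖z‖⁻¹ • z⟫ / H (‖z‖⁻¹ • z) ≤ r := hmax (inv_norm_smul_mem_sphere hz)
    rwa [hH.homogeneous _ hz_inv, Real.rpow_one, smul_eq_mul, real_inner_smul_right,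
      mul_div_mul_left _ _ hz_inv.ne', div_le_iff₀ (hH.pos hz)] at h
  have critical : innerSL ℝ y - r • innerSL ℝ (gradient H x) = 0 := by
    refine IsLocalMax.hasFDerivAt_eq_zero (f := fun z => ⟪y, z⟫ - r * H z) (a := x) ?_
      ((innerSL ℝ y).hasFDerivAt.sub
        ((hasFDerivAt_innerSL_gradient (hH.differentiableAt hx0)).const_mul r))
    filter_upwards [isOpen_compl_singleton.mem_nhds hx0] with z hz
    rw [hr, div_mul_cancel₀ _ (hH.pos hx0).ne', sub_self, sub_nonpos]
    exact inner_le hz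
  refine ⟨x, hx, r, ?_, ext_inner_right ℝ fun u => ?_⟩
  · exact pos_of_mul_pos_left ((real_inner_self_pos.2 hy).trans_le (inner_le hy)) (hH.pos hy).le
  · rw [real_inner_smul_left]
    exact sub_eq_zero.1 congr($critical u)

theorem measurableSet_image_gaussCone_starRegion (hH : IsRegularSupportFunction n H)
    {l : Euc n → ℝ} (hl : ContinuousOn l (sphere 0 1)) :
    MeasurableSet (gaussCone H '' starRegion l) :=
  (isOpen_starRegion hl).measurableSet.image_of_continuousOn_injOn
    (fun _ hz => (hH.hasFDerivAt_gaussCone hz.1).continuousAt.continuousWithinAt)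
    (hH.injOn_gaussCone.mono fun _ hz => hz.1)

theorem volume_image_gaussCone_starRegion (hH : IsRegularSupportFunction n H) {l : Euc n → ℝ}
    (hl : ContinuousOn l (sphere 0 1)) (hl0 : ∀ x ∈ sphere (0 : Euc n) 1, 0 < l x) :
    volume (gaussCone H '' starRegion l) = ENNReal.ofReal
      ((∫ x : sphere (0 : Euc n) 1, volDens n H x * l x ^ (n + 1) ∂sphMeasure n) / (n + 1)) := by
  have measurable_star := (isOpen_starRegion hl).measurableSet
  have cont_volDens : Continuous fun x : sphere (0 : Euc n) 1 => volDens n H x :=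
    hH.continuousOn_volDens.comp_continuous continuous_subtype_val ne_zero_of_mem_unit_sphere
  have cont_l : Continuous fun x : sphere (0 : Euc n) 1 => l x :=
    continuousOn_iff_continuous_domRestrict.1 hl
  have jacobian {z : Euc n} (hz : z ≠ 0) :
      |(fderiv ℝ (gaussCone H) z).det| = volDens n H (‖z‖⁻¹ • z) := by
    have hz' := inv_norm_smul_mem_sphere hz
    rw [hH.fderiv_gaussCone_eq hz, hH.det_fderiv_gaussCone hz', abs_of_pos (hH.volDens_pos hz')]
  have integrable : Integrable (fun x : sphere (0 : Euc n) 1 =>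
      volDens n H x * (l x ^ (n + 1) / (n + 1))) (volume : Measure (Euc n)).toSphere :=
    (cont_volDens.mul ((cont_l.pow _).div_const _)).integrable_of_hasCompactSupport
      (.of_compactSpace _)
  rw [← lintegral_abs_det_fderiv_eq_addHaar_image volume measurable_star
      (fun z hz => (hH.hasFDerivAt_gaussCone hz.1).differentiableAt.hasFDerivAt.hasFDerivWithinAt)
      (hH.injOn_gaussCone.mono fun _ hz => hz.1),
    setLIntegral_congr_fun measurable_star fun z hz => by rw [jacobian hz.1],
    setLIntegral_starRegion volume hl hl0 (g := fun z => ENNReal.ofReal (volDens n H z))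
      cont_volDens.measurable.ennreal_ofReal, ← integral_div]
  simp only [mul_div_assoc]
  rw [sphMeasure, ofReal_integral_eq_lintegral_ofReal integrable <| .of_forall fun x =>
    mul_nonneg (hH.volDens_pos x.2).le (by have := hl0 x x.2; positivity)]
  refine lintegral_congr fun x => ?_
  rw [ENNReal.ofReal_mul (hH.volDens_pos x.2).le, finrank_euclideanSpace_fin]
  push_cast
  rfl

theorem inner_lt_of_mem_image_starRegion (hH : IsRegularSupportFunction n H) {l u : Euc n → ℝ}
    (hl0 : ∀ x ∈ sphere (0 : Euc n) 1, 0 < l x)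
    (hlu : ∀ x ∈ sphere (0 : Euc n) 1, ∀ z ∈ sphere (0 : Euc n) 1, l x * ⟪gradient H x, z⟫ ≤ u z)
    {y : Euc n} (hy : y ∈ gaussCone H '' starRegion l) (hz : z ∈ sphere (0 : Euc n) 1) :
    ⟪y, z⟫ < u z := by
  obtain ⟨w, ⟨hw, norm_lt⟩, rfl⟩ := hy
  have norm_w : 0 < ‖w‖ := norm_pos_iff.2 hw
  have bound := hlu _ (inv_norm_smul_mem_sphere hw) z hz
  rw [hH.gradient_smul (inv_pos.2 norm_w)] at bound
  rw [gaussCone, real_inner_smul_left]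
  rcases le_or_gt ⟪gradient H w, z⟫ 0 with hle | hgt
  · have u_pos : 0 < u z := by
      have := hlu z hz z hz
      rw [hH.inner_gradient_self (ne_zero_of_mem_unit_sphere ⟨z, hz⟩)] at this
      exact (mul_pos (hl0 z hz) (hH.pos_of_mem_sphere z hz)).trans_le this
    exact (mul_nonpos_of_nonneg_of_nonpos norm_w.le hle).trans_lt u_pos
  · exact (mul_lt_mul_of_pos_right norm_lt hgt).trans_le bound

theorem mem_image_starRegion_one (hH : IsRegularSupportFunction n H) {y : Euc n} (hy : y ≠ 0)
    (h : ∀ z ∈ sphere (0 : Euc n) 1, ⟪y, z⟫ < H z) :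
    y ∈ gaussCone H '' starRegion fun _ => 1 := by
  obtain ⟨x, hx, r, hr, rfl⟩ := hH.exists_eq_smul_gradient hy
  have hr_lt : r < 1 := by
    have := h x hx
    rw [real_inner_smul_left, hH.inner_gradient_self (ne_zero_of_mem_unit_sphere ⟨x, hx⟩)] at this
    exact lt_of_mul_lt_mul_right (this.trans_eq (one_mul _).symm) (hH.pos_of_mem_sphere x hx).le
  refine ⟨r • x, (smul_mem_starRegion_iff hr hx).2 hr_lt, ?_⟩
  rw [gaussCone, hH.gradient_smul hr, norm_smul, norm_eq_of_mem_sphere ⟨x, hx⟩,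
    Real.norm_of_nonneg hr.le, mul_one]

theorem integral_volDens_mul_pow_mul_integral_le (hH : IsRegularSupportFunction n H)
    {l₁ l₂ u₁ u₂ : Euc n → ℝ}
    (hl₁ : ContinuousOn l₁ (sphere 0 1)) (hl₂ : ContinuousOn l₂ (sphere 0 1))
    (hp₁ : ∀ x ∈ sphere (0 : Euc n) 1, 0 < l₁ x) (hp₂ : ∀ x ∈ sphere (0 : Euc n) 1, 0 < l₂ x)
    (hlu₁ : ∀ x ∈ sphere (0 : Euc n) 1, ∀ z ∈ sphere (0 : Euc n) 1,
      l₁ x * ⟪gradient H x, z⟫ ≤ u₁ z)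
    (hlu₂ : ∀ x ∈ sphere (0 : Euc n) 1, ∀ z ∈ sphere (0 : Euc n) 1,
      l₂ x * ⟪gradient H x, z⟫ ≤ u₂ z)
    (hu : ∀ x ∈ sphere (0 : Euc n) 1, u₁ x + u₂ x = 2 * H x) :
    (∫ x : sphere (0 : Euc n) 1, volDens n H x * l₁ x ^ (n + 1) ∂sphMeasure n) *
        ∫ x : sphere (0 : Euc n) 1, volDens n H x * l₂ x ^ (n + 1) ∂sphMeasure n ≤
      (∫ x : sphere (0 : Euc n) 1, volDens n H x ∂sphMeasure n) ^ 2 := by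
  have midpoint : ∀ y₁ ∈ gaussCone H '' starRegion l₁, ∀ y₂ ∈ gaussCone H '' starRegion l₂,
      (1 / 2 : ℝ) • y₁ + (1 / 2 : ℝ) • y₂ ∈ insert 0 (gaussCone H '' starRegion fun _ => 1) :=
    fun y₁ h₁ y₂ h₂ => or_iff_not_imp_left.2 fun hne =>
      hH.mem_image_starRegion_one hne fun z hz => by
        have lt₁ := hH.inner_lt_of_mem_image_starRegion hp₁ hlu₁ h₁ hz
        have lt₂ := hH.inner_lt_of_mem_image_starRegion hp₂ hlu₂ h₂ hz
        rw [inner_add_left, real_inner_smul_left, real_inner_smul_left]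
        linarith [hu z hz]
  have nonneg {l : Euc n → ℝ} (hl : ∀ x ∈ sphere (0 : Euc n) 1, 0 < l x) :
      0 ≤ (∫ x : sphere (0 : Euc n) 1, volDens n H x * l x ^ (n + 1) ∂sphMeasure n) / (n + 1) :=
    div_nonneg (integral_nonneg fun x =>
      mul_nonneg (hH.volDens_pos x.2).le (pow_nonneg (hl x x.2).le _)) (by positivity)
  have bm := volume_mul_volume_le_sq
    (hH.measurableSet_image_gaussCone_starRegion hl₁)
    (hH.measurableSet_image_gaussCone_starRegion hl₂)
    ((hH.measurableSet_image_gaussCone_starRegion continuousOn_const).insert 0) midpoint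
  rw [measure_congr (insert_ae_eq_self 0 _), hH.volume_image_gaussCone_starRegion hl₁ hp₁,
    hH.volume_image_gaussCone_starRegion hl₂ hp₂,
    hH.volume_image_gaussCone_starRegion continuousOn_const fun _ _ => one_pos,
    ← ENNReal.ofReal_mul (nonneg hp₁), ← ENNReal.ofReal_pow (nonneg fun _ _ => one_pos),
    ENNReal.ofReal_le_ofReal_iff (sq_nonneg _), div_mul_div_comm, div_pow, ← sq,
    div_le_div_iff_of_pos_right (by positivity)] at bm
  simpa only [one_pow, mul_one] using bm

end IsRegularSupportFunction

/-! ### Perturbing the support function to second order -/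

theorem exists_pos_mul_sq_add_le {c δ : ℝ} (hc : 0 < c) (hδ : 0 < δ) (W : ℝ) :
    ∃ η > 0, η ≤ 1 / 2 ∧ ∀ t u v : ℝ, 0 ≤ v → v ≤ 2 * u + |t| * W →
      η * (v ^ 2 + |t| * v) ≤ c * u ^ 2 + δ * t ^ 2 := by
  set η := min (1 / 2) (min (c / 16) (δ / (4 * W ^ 2 + 1)))
  have η_pos : 0 < η := by positivity
  have η_le_c : η * 16 ≤ c :=
    (le_div_iff₀ (by norm_num)).1 ((min_le_right _ _).trans (min_le_left _ _))
  have η_le_δ : η * (4 * W ^ 2 + 1) ≤ δ :=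
    (le_div_iff₀ (by positivity)).1 ((min_le_right _ _).trans (min_le_right _ _))
  refine ⟨η, η_pos, min_le_left _ _, fun t u v hv hvu => ?_⟩
  have v_sq : v ^ 2 ≤ 8 * u ^ 2 + 2 * W ^ 2 * t ^ 2 := by
    nlinarith [pow_le_pow_left₀ hv hvu 2, sq_nonneg (2 * u - |t| * W), sq_abs t]
  calc η * (v ^ 2 + |t| * v) ≤ η * (2 * v ^ 2 + t ^ 2) := by
        refine mul_le_mul_of_nonneg_left ?_ η_pos.le
        nlinarith [sq_nonneg (|t| - v), sq_abs t, sq_nonneg v]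
    _ ≤ η * (2 * (8 * u ^ 2 + 2 * W ^ 2 * t ^ 2) + t ^ 2) := by gcongr
    _ = η * 16 * u ^ 2 + η * (4 * W ^ 2 + 1) * t ^ 2 := by ring
    _ ≤ c * u ^ 2 + δ * t ^ 2 := by gcongr

theorem eventually_abs_inner_sub_le_of_mem_sphere {E : Type*} [NormedAddCommGroup E]
    [InnerProductSpace ℝ E] (x₀ : E) (r : ℝ) {η : ℝ} (hη : 0 < η) :
    ∀ᶠ q : E × E in 𝓝[sphere 0 r ×ˢ sphere 0 r] (x₀, x₀),
      |⟪x₀, q.2 - q.1⟫| ≤ η * ‖q.2 - q.1‖ := by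
  have midpoint : ∀ᶠ q : E × E in 𝓝 (x₀, x₀), ‖x₀ - (1 / 2 : ℝ) • (q.1 + q.2)‖ < η := by
    have cont : Continuous fun q : E × E => ‖x₀ - (1 / 2 : ℝ) • (q.1 + q.2)‖ := by fun_prop
    refine cont.tendsto' (x₀, x₀) 0 ?_ |>.eventually_lt_const hη
    rw [norm_eq_zero]
    module
  filter_upwards [self_mem_nhdsWithin, nhdsWithin_le_nhds midpoint] with q ⟨hx, hz⟩ hq
  have orthogonal : ⟪q.1 + q.2, q.2 - q.1⟫ = 0 := by
    rw [add_comm, real_inner_add_sub_eq_zero_iff, mem_sphere_zero_iff_norm.1 hx,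
      mem_sphere_zero_iff_norm.1 hz]
  have : ⟪x₀, q.2 - q.1⟫ = ⟪x₀ - (1 / 2 : ℝ) • (q.1 + q.2), q.2 - q.1⟫ := by
    rw [inner_sub_left, real_inner_smul_left, orthogonal, mul_zero, sub_zero]
  rw [this]
  exact (abs_real_inner_le_norm _ _).trans (by gcongr)

/-- The squared centro-affine gradient norm `h ⟨A[h]⁻¹ ∇̄f, ∇̄f⟩` of a function `f`, written in
terms of a solution `ω` of `Df = D²H ω` so that no inverse of `A[h]` is needed. -/
def hessianEnergy {n : ℕ} (H : Euc n → ℝ) (ω : Euc n → Euc n) (x : Euc n) : ℝ :=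
  H x * ⟪hessianMap H x (ω x), ω x⟫

namespace IsRegularSupportFunction

variable {n : ℕ} {H f : Euc n → ℝ} {ω : Euc n → Euc n} {x x₀ z₀ : Euc n} {δ : ℝ}

theorem inner_hessianMap_add_smul (hH : IsRegularSupportFunction n H) (hx : x ≠ 0)
    (v w : Euc n) (t : ℝ) :
    ⟪hessianMap H x (v + t • w), v + t • w⟫ = ⟪hessianMap H x v, v⟫
      + 2 * t * ⟪hessianMap H x w, v⟫ + t ^ 2 * ⟪hessianMap H x w, w⟫ := by
  simp only [map_add, map_smul, inner_add_left, inner_add_right, real_inner_smul_left,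
    real_inner_smul_right]
  rw [inner_hessianMap_comm (hH.contDiffAt hx) v w, real_inner_comm (hessianMap H x w)]
  ring

-- Completing the square with `v + t • H x • w` and absorbing errors by coercivity on `x^⊥`.
theorem exists_pos_mul_le_hessianMap (hH : IsRegularSupportFunction n H)
    (hx : x ∈ sphere (0 : Euc n) 1) (w : Euc n) (hδ : 0 < δ) :
    ∃ η > 0, ∀ (t : ℝ) (v : Euc n), |⟪x, v⟫| ≤ η * ‖v‖ →
      η * (‖v‖ ^ 2 + |t| * ‖v‖) ≤ 1 / 2 * ⟪hessianMap H x v, v⟫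
        + t * (H x * ⟪hessianMap H x w, v⟫)
        + t ^ 2 / 2 * (H x ^ 2 * ⟪hessianMap H x w, w⟫) + δ * t ^ 2 := by
  obtain ⟨c, hc, coercive⟩ := hH.exists_pos_mul_norm_sq_le_inner_hessianMap hx
  let P : Euc n → Euc n := fun u => u - ⟪x, u⟫ • x
  let W : Euc n := H x • w
  obtain ⟨η, η_pos, η_le, absorb⟩ := exists_pos_mul_sq_add_le (half_pos hc) hδ (2 * ‖P W‖)
  refine ⟨η, η_pos, fun t v hv => ?_⟩
  have norm_v : ‖v‖ ≤ ‖P (v + t • W)‖ + |t| * ‖P W‖ + η * ‖v‖ := by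
    have split : v = P (v + t • W) - t • P W + ⟪x, v⟫ • x := by
      simp only [P, inner_add_right, real_inner_smul_right]
      module
    calc ‖v‖ = ‖P (v + t • W) - t • P W + ⟪x, v⟫ • x‖ := congrArg norm split
      _ ≤ ‖P (v + t • W)‖ + ‖t • P W‖ + ‖⟪x, v⟫ • x‖ := norm_add_le_of_le (norm_sub_le _ _) le_rfl
      _ ≤ ‖P (v + t • W)‖ + |t| * ‖P W‖ + η * ‖v‖ := by
        rw [norm_smul, norm_smul, norm_eq_of_mem_sphere ⟨x, hx⟩, mul_one]
        exact add_le_add le_rfl hv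
  have half_v : η * ‖v‖ ≤ 1 / 2 * ‖v‖ := by gcongr
  calc η * (‖v‖ ^ 2 + |t| * ‖v‖) ≤ c / 2 * ‖P (v + t • W)‖ ^ 2 + δ * t ^ 2 :=
        absorb t _ _ (norm_nonneg v) (by linarith)
    _ ≤ 1 / 2 * ⟪hessianMap H x (v + t • W), v + t • W⟫ + δ * t ^ 2 := by
        linarith [coercive (v + t • W)]
    _ = _ := by
        rw [hH.inner_hessianMap_add_smul (ne_zero_of_mem_unit_sphere ⟨x, hx⟩)]
        simp only [W, map_smul, real_inner_smul_left, real_inner_smul_right]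
        ring

theorem isLittleO_mul_sub_mul_inner_gradient (hH : IsRegularSupportFunction n H) (hx : x ≠ 0)
    {y : Euc n} (hf : HasStrictFDerivAt f (innerSL ℝ y) x) :
    (fun q : Euc n × Euc n => f q.2 * H q.2 - f q.1 * ⟪gradient H q.1, q.2⟫
      - H x * ⟪y, q.2 - q.1⟫) =o[𝓝 (x, x)] fun q => q.2 - q.1 := by
  have hX : ContinuousAt (gradient H) x := (contDiffAt_gradient (hH.contDiffAt hx)).continuousAt
  have strict_H : HasStrictFDerivAt H (innerSL ℝ (gradient H x)) x := by
    have h := (hH.contDiffAt hx).hasStrictFDerivAt two_ne_zero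
    rwa [(hH.differentiableAt hx).hasGradientAt.hasFDerivAt.fderiv] at h
  have product : (fun q : Euc n × Euc n => f q.2 * H q.2 - f q.1 * H q.1
      - ⟪f x • gradient H x + H x • y, q.2 - q.1⟫) =o[𝓝 (x, x)] fun q => q.2 - q.1 := by
    have swap : Filter.Tendsto Prod.swap (𝓝 (x, x)) (𝓝 (x, x)) := continuous_swap.tendsto _
    refine ((hf.mul strict_H).isLittleO.comp_tendsto swap).congr_left fun q => ?_
    simp [-inner_gradient_left, inner_add_left, real_inner_smul_left]
  have variation : (fun q : Euc n × Euc n =>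
      ⟪f q.1 • gradient H q.1 - f x • gradient H x, q.2 - q.1⟫) =o[𝓝 (x, x)]
      fun q => q.2 - q.1 := by
    have small : (fun q : Euc n × Euc n => f q.1 • gradient H q.1 - f x • gradient H x)
        =o[𝓝 (x, x)] fun _ => (1 : ℝ) := by
      refine (Asymptotics.isLittleO_one_iff ℝ).2 (sub_self (f x • gradient H x) ▸ ?_)
      exact (hf.continuousAt.smul hX).fst'.tendsto.sub_const _
    refine (Asymptotics.IsBigO.of_norm_le fun q => abs_real_inner_le_norm _ _).trans_isLittleO ?_
    simpa using small.norm_left.mul_isBigO (Asymptotics.isBigO_refl _ _).norm_norm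
  refine (product.sub variation).congr' ?_ .rfl
  filter_upwards [continuousAt_fst.eventually_ne hx] with q hq
  rw [← hH.inner_gradient_self hq]
  simp only [inner_sub_left, inner_sub_right, inner_add_left, real_inner_smul_left]
  ring

theorem continuousAt_hessianEnergy (hH : IsRegularSupportFunction n H) (hx : x ≠ 0)
    (hω : ContinuousAt ω x) : ContinuousAt (hessianEnergy H ω) x :=
  (hH.contDiffAt hx).continuousAt.mul
    (((continuousAt_hessianMap (hH.contDiffAt hx)).clm_apply hω).inner hω)

theorem continuousAt_inner_gradient (hH : IsRegularSupportFunction n H) (hx : x₀ ≠ 0) :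
    ContinuousAt (fun q : Euc n × Euc n => ⟪gradient H q.1, q.2⟫) (x₀, z₀) :=
  (contDiffAt_gradient (hH.contDiffAt hx)).continuousAt.fst'.inner continuousAt_snd

theorem eventually_forall_perturbed_inner_gradient_le (hH : IsRegularSupportFunction n H)
    (hx : x₀ ∈ sphere (0 : Euc n) 1)
    (hf : HasStrictFDerivAt f (innerSL ℝ (hessianMap H x₀ (ω x₀))) x₀) (hω : ContinuousAt ω x₀)
    (hδ : 0 < δ) :
    ∀ᶠ q in 𝓝[sphere 0 1 ×ˢ sphere 0 1] (x₀, x₀), ∀ t : ℝ,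
      (1 + t * f q.1 - t ^ 2 / 2 * (hessianEnergy H ω q.1 + δ)) * ⟪gradient H q.1, q.2⟫
        ≤ (1 + t * f q.2) * H q.2 := by
  have hx_ne : x₀ ≠ 0 := ne_zero_of_mem_unit_sphere ⟨x₀, hx⟩
  have δH_pos : 0 < δ * H x₀ := mul_pos hδ (hH.pos_of_mem_sphere x₀ hx)
  obtain ⟨η, η_pos, absorb⟩ := hH.exists_pos_mul_le_hessianMap hx (ω x₀)
    (show 0 < δ * H x₀ / 4 by positivity)
  have energy : ∀ᶠ q in 𝓝 (x₀, x₀), (hessianEnergy H ω x₀ + δ / 2) * H x₀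
      < (hessianEnergy H ω q.1 + δ) * ⟪gradient H q.1, q.2⟫ := by
    refine ((hH.continuousAt_hessianEnergy hx_ne hω).fst'.add_const δ).mul
      (hH.continuousAt_inner_gradient hx_ne) |>.eventually_const_lt ?_
    simp only [Pi.mul_apply]
    rw [hH.inner_gradient_self hx_ne]
    linarith
  filter_upwards [self_mem_nhdsWithin, eventually_abs_inner_sub_le_of_mem_sphere x₀ 1 η_pos,
    nhdsWithin_le_nhds energy,
    nhdsWithin_le_nhds ((isLittleO_taylor_two_gradient (hH.contDiffAt hx_ne)).def η_pos),
    nhdsWithin_le_nhds ((hH.isLittleO_mul_sub_mul_inner_gradient hx_ne hf).def η_pos)]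
    with ⟨x, z⟩ hxz tangential energy taylor firstOrder t
  have secondOrder : 1 / 2 * ⟪hessianMap H x₀ (z - x), z - x⟫ - η * ‖z - x‖ ^ 2
      ≤ H z - ⟪gradient H x, z⟫ := by
    have := (abs_le.1 taylor).1
    rw [norm_pow, norm_norm, inner_sub_right,
      hH.inner_gradient_self (ne_zero_of_mem_unit_sphere ⟨x, hxz.1⟩)] at this
    linarith
  have firstOrder : t * (H x₀ * ⟪hessianMap H x₀ (ω x₀), z - x⟫) - |t| * (η * ‖z - x‖)
      ≤ t * (f z * H z - f x * ⟪gradient H x, z⟫) := by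
    have := neg_le_of_abs_le ((abs_mul t _).trans_le
      (mul_le_mul_of_nonneg_left firstOrder (abs_nonneg t)))
    linarith
  have := absorb t (z - x) tangential
  have := mul_le_mul_of_nonneg_left energy.le (show 0 ≤ t ^ 2 / 2 by positivity)
  simp only [hessianEnergy] at *
  linarith

theorem eventually_perturbed_inner_gradient_lt (hH : IsRegularSupportFunction n H)
    (hx : x₀ ∈ sphere (0 : Euc n) 1) (hz : z₀ ∈ sphere (0 : Euc n) 1) (hxz : x₀ ≠ z₀)
    (hfx : ContinuousAt f x₀) (hfz : ContinuousAt f z₀) (hω : ContinuousAt ω x₀) (δ : ℝ) :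
    ∀ᶠ q : ℝ × Euc n × Euc n in 𝓝 (0, x₀, z₀),
      (1 + q.1 * f q.2.1 - q.1 ^ 2 / 2 * (hessianEnergy H ω q.2.1 + δ))
        * ⟪gradient H q.2.1, q.2.2⟫ < (1 + q.1 * f q.2.2) * H q.2.2 := by
  have fst_tendsto : Filter.Tendsto (fun q : ℝ × Euc n × Euc n => q.2.1) (𝓝 (0, x₀, z₀)) (𝓝 x₀) :=
    (continuous_fst.comp continuous_snd).tendsto _
  have snd_tendsto : Filter.Tendsto (fun q : ℝ × Euc n × Euc n => q.2.2) (𝓝 (0, x₀, z₀)) (𝓝 z₀) :=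
    (continuous_snd.comp continuous_snd).tendsto _
  have hx_ne : x₀ ≠ 0 := ne_zero_of_mem_unit_sphere ⟨x₀, hx⟩
  have hz_ne : z₀ ≠ 0 := ne_zero_of_mem_unit_sphere ⟨z₀, hz⟩
  refine Filter.Tendsto.eventually_lt
    ((((continuousAt_fst.mul (hfx.tendsto.comp fst_tendsto)).const_add 1).sub
      (((continuousAt_fst.pow 2).div_const 2).mul
      (((hH.continuousAt_hessianEnergy hx_ne hω).tendsto.comp fst_tendsto).add_const δ))).mul
      ((hH.continuousAt_inner_gradient hx_ne).tendsto.comp continuousAt_snd))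
    (((continuousAt_fst.mul (hfz.tendsto.comp snd_tendsto)).const_add 1).mul
      ((hH.contDiffAt hz_ne).continuousAt.tendsto.comp snd_tendsto)) ?_
  simpa [-inner_gradient_left] using hH.inner_gradient_lt hx hz hxz

theorem eventually_forall_mem_sphere_perturbed_inner_gradient_le
    (hH : IsRegularSupportFunction n H)
    (hf : ∀ x ∈ sphere (0 : Euc n) 1, HasStrictFDerivAt f (innerSL ℝ (hessianMap H x (ω x))) x)
    (hω : ∀ x ∈ sphere (0 : Euc n) 1, ContinuousAt ω x) (hδ : 0 < δ) :
    ∀ᶠ t : ℝ in 𝓝 0, ∀ x ∈ sphere (0 : Euc n) 1, ∀ z ∈ sphere (0 : Euc n) 1,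
      (1 + t * f x - t ^ 2 / 2 * (hessianEnergy H ω x + δ)) * ⟪gradient H x, z⟫
        ≤ (1 + t * f z) * H z := by
  suffices ∀ᶠ t : ℝ in 𝓝 0, ∀ q ∈ sphere (0 : Euc n) 1 ×ˢ sphere (0 : Euc n) 1,
      q ∈ sphere (0 : Euc n) 1 ×ˢ sphere (0 : Euc n) 1 →
      (1 + t * f q.1 - t ^ 2 / 2 * (hessianEnergy H ω q.1 + δ)) * ⟪gradient H q.1, q.2⟫
        ≤ (1 + t * f q.2) * H q.2 from
    this.mono fun t ht x hx z hz => ht (x, z) ⟨hx, hz⟩ ⟨hx, hz⟩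
  refine ((isCompact_sphere _ _).prod
    (isCompact_sphere _ _)).eventually_forall_of_forall_eventually ?_
  rintro ⟨x₀, z₀⟩ ⟨hx, hz⟩
  rcases eq_or_ne x₀ z₀ with rfl | hxz
  · have diagonal := eventually_nhdsWithin_iff.1
      (hH.eventually_forall_perturbed_inner_gradient_le hx (hf x₀ hx) (hω x₀ hx) hδ)
    exact (continuousAt_snd.eventually diagonal).mono fun q hq hq_mem => hq hq_mem q.1
  · exact (hH.eventually_perturbed_inner_gradient_lt hx hz hxz (hf x₀ hx).continuousAt
      (hf z₀ hz).continuousAt (hω x₀ hx) δ).mono fun q hq _ => hq.le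

end IsRegularSupportFunction

/-! ### The weighted Poincaré inequality -/

section SecondVariation

theorem exists_continuous_one_add_pow_eq (N : ℕ) :
    ∃ q : ℝ → ℝ, Continuous q ∧ 2 * q 0 = N * (N - 1) ∧
      ∀ y, (1 + y) ^ N = 1 + N * y + y ^ 2 * q y := by
  induction N with
  | zero => exact ⟨0, continuous_const, by simp, by simp⟩
  | succ N ih =>
    obtain ⟨q, hq, hq_zero, expand⟩ := ih
    refine ⟨fun y => N + (1 + y) * q y, by fun_prop, ?_, fun y => ?_⟩
    · push_cast
      linarith
    · rw [pow_succ, expand]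
      push_cast
      ring

theorem nonpos_of_eventually_mul_le_sq {V : ℝ} (hV : 0 < V) {A : ℝ → ℝ} (hA : Continuous A)
    (h : ∀ᶠ t in 𝓝 0, (V + t ^ 2 * A t) * (V + (-t) ^ 2 * A (-t)) ≤ V ^ 2) : A 0 ≤ 0 := by
  have quotient : ∀ᶠ t in 𝓝[≠] 0, V * (A t + A (-t)) + t ^ 2 * (A t * A (-t)) ≤ 0 := by
    filter_upwards [nhdsWithin_le_nhds h, self_mem_nhdsWithin] with t ht t_ne
    refine nonpos_of_mul_nonpos_right (a := t ^ 2) ?_ (sq_pos_of_ne_zero t_ne)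
    linarith
  have cont : Continuous fun t => V * (A t + A (-t)) + t ^ 2 * (A t * A (-t)) := by fun_prop
  have limit := le_of_tendsto ((cont.tendsto 0).mono_left nhdsWithin_le_nhds) quotient
  simp only [neg_zero, ne_eq, OfNat.ofNat_ne_zero, not_false_eq_true, zero_pow, zero_mul,
    add_zero] at limit
  nlinarith

theorem eventually_forall_pos_one_add_mul_sub {S : Type*} [TopologicalSpace S]
    [CompactSpace S] {f g : S → ℝ} (hf : Continuous f) (hg : Continuous g) :
    ∀ᶠ t in 𝓝 (0 : ℝ), ∀ x, 0 < 1 + t * f x - t ^ 2 / 2 * g x := by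
  have cont : Continuous fun q : ℝ × S => 1 + q.1 * f q.2 - q.1 ^ 2 / 2 * g q.2 := by fun_prop
  suffices ∀ᶠ t in 𝓝 (0 : ℝ), ∀ x ∈ Set.univ, 0 < 1 + t * f x - t ^ 2 / 2 * g x by simpa using this
  refine isCompact_univ.eventually_forall_of_forall_eventually fun x _ => ?_
  exact cont.continuousAt.eventually_const_lt (by simp)

variable {S : Type*} [MeasurableSpace S] {μ : Measure S} {v f g : S → ℝ}

theorem integral_mul_sub_div_integral_eq_zero (hv : Integrable v μ)
    (hvf : Integrable (fun x => v x * f x) μ) (hV : ∫ x, v x ∂μ ≠ 0) :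
    ∫ x, v x * (f x - (∫ x, v x * f x ∂μ) / ∫ x, v x ∂μ) ∂μ = 0 := by
  simp only [mul_sub]
  rw [integral_sub hvf (hv.mul_const _), integral_mul_const, mul_div_cancel₀ _ hV, sub_self]

theorem integral_mul_sub_div_integral_sq (hv : Integrable v μ)
    (hvf : Integrable (fun x => v x * f x) μ) (hvf_sq : Integrable (fun x => v x * f x ^ 2) μ)
    (hV : ∫ x, v x ∂μ ≠ 0) :
    ∫ x, v x * (f x - (∫ x, v x * f x ∂μ) / ∫ x, v x ∂μ) ^ 2 ∂μ
      = ∫ x, v x * f x ^ 2 ∂μ - (∫ x, v x * f x ∂μ) ^ 2 / ∫ x, v x ∂μ := by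
  set m := (∫ x, v x * f x ∂μ) / ∫ x, v x ∂μ
  have expand : ∀ x, v x * (f x - m) ^ 2
      = v x * f x ^ 2 - 2 * m * (v x * f x) + m ^ 2 * v x := fun x => by ring
  have diff_integrable : Integrable (fun x => v x * f x ^ 2 - 2 * m * (v x * f x)) μ :=
    hvf_sq.sub (hvf.const_mul _)
  simp only [expand]
  rw [integral_add diff_integrable (hv.const_mul _),
    integral_sub hvf_sq (hvf.const_mul _), integral_const_mul, integral_const_mul]
  simp only [m]
  field_simp
  ring

theorem exists_continuous_integral_mul_one_add_pow_eq [TopologicalSpace S] [CompactSpace S]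
    [BorelSpace S] [IsFiniteMeasure μ] (hv : Continuous v) (hf : Continuous f)
    (hg : Continuous g) (N : ℕ) :
    ∃ A : ℝ → ℝ, Continuous A ∧
      2 * A 0 = N * ((N - 1) * ∫ x, v x * f x ^ 2 ∂μ - ∫ x, v x * g x ∂μ) ∧
      ∀ t, ∫ x, v x * (1 + t * f x - t ^ 2 / 2 * g x) ^ N ∂μ
        = ∫ x, v x ∂μ + N * t * ∫ x, v x * f x ∂μ + t ^ 2 * A t := by
  have integrable : ∀ {u : S → ℝ}, Continuous u → Integrable u μ :=
    fun hu => hu.integrable_of_hasCompactSupport (.of_compactSpace _)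
  obtain ⟨q, hq, hq_zero, expand⟩ := exists_continuous_one_add_pow_eq N
  let a : ℝ → S → ℝ := fun t x =>
    v x * ((f x - t / 2 * g x) ^ 2 * q (t * f x - t ^ 2 / 2 * g x) - N / 2 * g x)
  have ha : Continuous a.uncurry := by
    simp only [a, Function.uncurry_def]
    fun_prop
  have a_integrable (t : ℝ) : Integrable (a t) μ := integrable (by fun_prop)
  refine ⟨fun t => ∫ x, a t x ∂μ, ?_, ?_, fun t => ?_⟩
  · simpa using continuous_parametric_integral_of_continuous (μ := μ) ha isCompact_univ
  · rw [mul_sub, ← mul_assoc, ← hq_zero, ← integral_const_mul, ← integral_const_mul,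
      ← integral_const_mul, ← integral_sub (integrable (by fun_prop)) (integrable (by fun_prop))]
    refine integral_congr_ae (.of_forall fun x => ?_)
    simp only [a, zero_mul, zero_div, sub_zero, ne_eq, OfNat.ofNat_ne_zero, not_false_eq_true,
      zero_pow]
    ring
  · rw [← integral_const_mul, ← integral_const_mul,
      ← integral_add (integrable (by fun_prop)) (integrable (by fun_prop)),
      ← integral_add (integrable (by fun_prop)) ((a_integrable t).const_mul _)]
    refine integral_congr_ae (.of_forall fun x => ?_)
    simp only [a, add_sub_assoc, expand]
    ring

end SecondVariation

instance (n : ℕ) : IsFiniteMeasure (sphMeasure n) :=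
  inferInstanceAs (IsFiniteMeasure (volume : Measure (Euc n)).toSphere)

namespace IsRegularSupportFunction

variable {n : ℕ} {H f : Euc n → ℝ} {ω : Euc n → Euc n} {δ : ℝ}

theorem continuous_volDens_sphere (hH : IsRegularSupportFunction n H) :
    Continuous fun x : sphere (0 : Euc n) 1 => volDens n H x :=
  hH.continuousOn_volDens.comp_continuous continuous_subtype_val ne_zero_of_mem_unit_sphere

theorem continuous_hessianEnergy_sphere (hH : IsRegularSupportFunction n H)
    (hω : ∀ x ∈ sphere (0 : Euc n) 1, ContinuousAt ω x) :
    Continuous fun x : sphere (0 : Euc n) 1 => hessianEnergy H ω x :=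
  continuous_iff_continuousAt.2 fun x =>
    (hH.continuousAt_hessianEnergy (ne_zero_of_mem_unit_sphere x) (hω x x.2)).comp
      continuous_subtype_val.continuousAt

theorem integral_volDens_pos (hH : IsRegularSupportFunction n H) :
    0 < ∫ x : sphere (0 : Euc n) 1, volDens n H x ∂sphMeasure n := by
  obtain ⟨x⟩ : Nonempty (sphere (0 : Euc n) 1) :=
    (NormedSpace.sphere_nonempty.2 zero_le_one).to_subtype
  have : (sphMeasure n).IsOpenPosMeasure :=
    inferInstanceAs (volume : Measure (Euc n)).toSphere.IsOpenPosMeasure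
  exact hH.continuous_volDens_sphere.integral_pos_of_hasCompactSupport_nonneg_nonzero
    (.of_compactSpace _) (fun x => (hH.volDens_pos x.2).le) (hH.volDens_pos x.2).ne'

-- The `t²` coefficient of the Brunn–Minkowski inequality for the bodies with support functions
-- `(1 ± t f) H`.
theorem mul_integral_volDens_mul_sq_le_add (hH : IsRegularSupportFunction n H)
    (hf : ∀ x ∈ sphere (0 : Euc n) 1, HasStrictFDerivAt f (innerSL ℝ (hessianMap H x (ω x))) x)
    (hω : ∀ x ∈ sphere (0 : Euc n) 1, ContinuousAt ω x)
    (mean_zero : ∫ x : sphere (0 : Euc n) 1, volDens n H x * f x ∂sphMeasure n = 0)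
    (hδ : 0 < δ) :
    n * ∫ x : sphere (0 : Euc n) 1, volDens n H x * f x ^ 2 ∂sphMeasure n
      ≤ ∫ x : sphere (0 : Euc n) 1, volDens n H x * (hessianEnergy H ω x + δ) ∂sphMeasure n := by
  let g : Euc n → ℝ := fun x => hessianEnergy H ω x + δ
  have f_cont : ContinuousOn f (sphere 0 1) := fun x hx => (hf x hx).continuousAt.continuousWithinAt
  have g_cont : ContinuousOn g (sphere 0 1) := fun x hx =>
    ((hH.continuousAt_hessianEnergy (ne_zero_of_mem_unit_sphere ⟨x, hx⟩)
      (hω x hx)).add_const δ).continuousWithinAt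
  obtain ⟨A, A_cont, A_zero, expand⟩ := exists_continuous_integral_mul_one_add_pow_eq
    (μ := sphMeasure n) hH.continuous_volDens_sphere f_cont.domRestrict g_cont.domRestrict (n + 1)
  simp only [Set.domRestrict_apply, mean_zero, mul_zero, add_zero] at A_zero expand
  have positive := eventually_forall_pos_one_add_mul_sub f_cont.domRestrict g_cont.domRestrict
  have support := hH.eventually_forall_mem_sphere_perturbed_inner_gradient_le hf hω hδ
  have neg_tendsto : Filter.Tendsto (fun t : ℝ => -t) (𝓝 0) (𝓝 0) :=
    continuous_neg.tendsto' 0 0 neg_zero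
  have A_nonpos : A 0 ≤ 0 := by
    refine nonpos_of_eventually_mul_le_sq hH.integral_volDens_pos A_cont ?_
    filter_upwards [positive, support, neg_tendsto.eventually positive,
      neg_tendsto.eventually support] with t pos_t supp_t pos_neg supp_neg
    rw [← expand, ← expand]
    refine hH.integral_volDens_mul_pow_mul_integral_le
      (l₁ := fun x => 1 + t * f x - t ^ 2 / 2 * g x)
      (l₂ := fun x => 1 + -t * f x - (-t) ^ 2 / 2 * g x) (by fun_prop) (by fun_prop)
      (fun x hx => pos_t ⟨x, hx⟩) (fun x hx => pos_neg ⟨x, hx⟩) supp_t supp_neg fun x _ => by ring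
  push_cast at A_zero
  have : ((n : ℝ) + 1) * (n * ∫ x : sphere (0 : Euc n) 1, volDens n H x * f x ^ 2 ∂sphMeasure n
      - ∫ x : sphere (0 : Euc n) 1, volDens n H x * g x ∂sphMeasure n) ≤ 0 := by
    rw [add_sub_cancel_right] at A_zero
    linarith
  exact sub_nonpos.1 (nonpos_of_mul_nonpos_right this (by positivity))

theorem mul_integral_volDens_mul_sq_le_of_integral_eq_zero (hH : IsRegularSupportFunction n H)
    (hf : ∀ x ∈ sphere (0 : Euc n) 1, HasStrictFDerivAt f (innerSL ℝ (hessianMap H x (ω x))) x)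
    (hω : ∀ x ∈ sphere (0 : Euc n) 1, ContinuousAt ω x)
    (mean_zero : ∫ x : sphere (0 : Euc n) 1, volDens n H x * f x ∂sphMeasure n = 0) :
    n * ∫ x : sphere (0 : Euc n) 1, volDens n H x * f x ^ 2 ∂sphMeasure n
      ≤ ∫ x : sphere (0 : Euc n) 1, volDens n H x * hessianEnergy H ω x ∂sphMeasure n := by
  have vol_integrable := hH.continuous_volDens_sphere.integrable_of_hasCompactSupport
    (μ := sphMeasure n) (.of_compactSpace _)
  have energy_integrable := (hH.continuous_volDens_sphere.fun_mul
    (hH.continuous_hessianEnergy_sphere hω)).integrable_of_hasCompactSupport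
    (μ := sphMeasure n) (.of_compactSpace _)
  refine le_of_forall_pos_lt_add fun ε hε => ?_
  have V_pos := hH.integral_volDens_pos
  set V := ∫ x : sphere (0 : Euc n) 1, volDens n H x ∂sphMeasure n
  have h := hH.mul_integral_volDens_mul_sq_le_add hf hω mean_zero (div_pos (half_pos hε) V_pos)
  simp only [mul_add] at h
  rw [integral_add energy_integrable (vol_integrable.mul_const _), integral_mul_const,
    mul_div_cancel₀ _ V_pos.ne'] at h
  linarith

theorem mul_integral_volDens_mul_sq_le (hH : IsRegularSupportFunction n H)
    (hf : ∀ x ∈ sphere (0 : Euc n) 1, HasStrictFDerivAt f (innerSL ℝ (hessianMap H x (ω x))) x)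
    (hω : ∀ x ∈ sphere (0 : Euc n) 1, ContinuousAt ω x) :
    n * ∫ x : sphere (0 : Euc n) 1, volDens n H x * f x ^ 2 ∂sphMeasure n
      ≤ ∫ x : sphere (0 : Euc n) 1, volDens n H x * hessianEnergy H ω x ∂sphMeasure n
        + n * ((∫ x : sphere (0 : Euc n) 1, volDens n H x * f x ∂sphMeasure n) ^ 2
          / ∫ x : sphere (0 : Euc n) 1, volDens n H x ∂sphMeasure n) := by
  have f_cont : Continuous fun x : sphere (0 : Euc n) 1 => f x :=
    continuous_iff_continuousAt.2 fun x =>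
      (hf x x.2).continuousAt.comp continuous_subtype_val.continuousAt
  have integrable : ∀ {u : sphere (0 : Euc n) 1 → ℝ}, Continuous u → Integrable u (sphMeasure n) :=
    fun hu => hu.integrable_of_hasCompactSupport (.of_compactSpace _)
  have vol_cont := hH.continuous_volDens_sphere
  have centered := hH.mul_integral_volDens_mul_sq_le_of_integral_eq_zero
    (fun x hx => (hf x hx).sub_const _) hω (integral_mul_sub_div_integral_eq_zero
      (integrable vol_cont) (integrable (vol_cont.mul f_cont)) hH.integral_volDens_pos.ne')
  rw [integral_mul_sub_div_integral_sq (integrable vol_cont) (integrable (vol_cont.mul f_cont))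
    (integrable (vol_cont.mul (f_cont.pow 2))) hH.integral_volDens_pos.ne'] at centered
  linarith

end IsRegularSupportFunction

/-! ### Radial powers -/

section RadialPow

open InnerProductSpace

variable {E : Type*} [NormedAddCommGroup E] [InnerProductSpace ℝ E] {a : ℝ} {y : E}

/-- The vector field `y ↦ ‖y‖^a y`, so that `radialPow α (gradient H x)` is `r^α X`. -/
def radialPow (a : ℝ) (y : E) : E := ‖y‖ ^ a • y

/-- The derivative `‖y‖^a (1 + a ‖y‖⁻² y ⊗ y)` of `radialPow a` at `y ≠ 0`. -/
def radialPowDeriv (a : ℝ) (y : E) : E →L[ℝ] E :=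
  ‖y‖ ^ a • (.id ℝ E + (a / ‖y‖ ^ 2) • rankOne ℝ y y)

theorem hasStrictFDerivAt_radialPow (hy : y ≠ 0) :
    HasStrictFDerivAt (radialPow a) (radialPowDeriv a y) y := by
  have norm_ne : ‖y‖ ≠ 0 := norm_ne_zero_iff.2 hy
  refine (((hasStrictFDerivAt_norm hy).rpow_const (Or.inl norm_ne)).smul
    (hasStrictFDerivAt_id y)).congr_fderiv ?_
  ext u
  simp only [radialPowDeriv, Real.rpow_sub_one norm_ne, _root_.add_apply, _root_.smul_apply,
    ContinuousLinearMap.smulRight_apply, ContinuousLinearMap.id_apply, rankOne_apply,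
    innerSL_apply_apply, smul_eq_mul, smul_add, smul_smul, id_eq]
  congr 2
  field_simp

theorem contDiffAt_radialPow {m : ℕ∞} (hy : y ≠ 0) : ContDiffAt ℝ m (radialPow a) y :=
  ((contDiffAt_norm ℝ hy).rpow_const_of_ne (norm_ne_zero_iff.2 hy)).smul contDiffAt_id

theorem continuousAt_radialPowDeriv (hy : y ≠ 0) : ContinuousAt (radialPowDeriv (E := E) a) y := by
  have norm_cont : ContinuousAt (fun y : E => ‖y‖) y := continuous_norm.continuousAt
  have rankOne_cont : Continuous fun y : E => rankOne ℝ y y :=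
    (rankOne ℝ).continuous.clm_apply continuous_id
  exact (norm_cont.rpow_const (Or.inl (norm_ne_zero_iff.2 hy))).smul (continuousAt_const.add
    ((continuousAt_const.div (norm_cont.pow 2) (pow_ne_zero 2 (norm_ne_zero_iff.2 hy))).smul
      rankOne_cont.continuousAt))

theorem isSelfAdjoint_radialPowDeriv [CompleteSpace E] (a : ℝ) (y : E) :
    IsSelfAdjoint (radialPowDeriv a y) := by
  refine ContinuousLinearMap.isSelfAdjoint_iff_isSymmetric.2 fun u v => ?_
  simp [radialPowDeriv, inner_add_left, inner_add_right, real_inner_smul_left,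
    real_inner_smul_right, real_inner_comm y, mul_comm]

theorem radialPowDeriv_comp_self (hy : y ≠ 0) : radialPowDeriv a y ∘L radialPowDeriv a y
    = (‖y‖ ^ a) ^ 2 • (.id ℝ E + ((2 * a + a ^ 2) / ‖y‖ ^ 2) • rankOne ℝ y y) := by
  have norm_ne : ‖y‖ ≠ 0 := norm_ne_zero_iff.2 hy
  ext u
  simp only [radialPowDeriv, ContinuousLinearMap.comp_apply, _root_.smul_apply, _root_.add_apply,
    ContinuousLinearMap.id_apply, rankOne_apply, inner_add_right, real_inner_smul_right,
    real_inner_self_eq_norm_sq]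
  match_scalars
  · ring
  · field_simp
    ring

variable [FiniteDimensional ℝ E]

theorem trace_id_add_smul_rankOne_comp (c : ℝ) (y : E) (L : E →L[ℝ] E) :
    LinearMap.trace ℝ E ((.id ℝ E + c • rankOne ℝ y y) ∘L L : E →L[ℝ] E)
      = LinearMap.trace ℝ E L + c * ⟪L y, y⟫ := by
  rw [ContinuousLinearMap.toLinearMap_comp, LinearMap.trace_comp_comm',
    ← ContinuousLinearMap.toLinearMap_comp, ContinuousLinearMap.comp_add,
    ContinuousLinearMap.comp_id, ContinuousLinearMap.comp_smul, comp_rankOne,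
    ContinuousLinearMap.toLinearMap_add, ContinuousLinearMap.toLinearMap_smul, map_add, map_smul,
    trace_rankOne, real_inner_comm, smul_eq_mul]

theorem trace_radialPowDeriv_comp (a : ℝ) (y : E) (L : E →L[ℝ] E) :
    LinearMap.trace ℝ E (radialPowDeriv a y ∘L L : E →L[ℝ] E)
      = ‖y‖ ^ a * (LinearMap.trace ℝ E L + a * (⟪L y, y⟫ / ‖y‖ ^ 2)) := by
  rw [radialPowDeriv, ContinuousLinearMap.smul_comp, ContinuousLinearMap.toLinearMap_smul, map_smul,
    trace_id_add_smul_rankOne_comp, smul_eq_mul]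
  ring

theorem trace_radialPowDeriv_comp_comp_adjoint (hy : y ≠ 0) (L : E →L[ℝ] E) :
    LinearMap.trace ℝ E
        (radialPowDeriv a y ∘L L ∘L (radialPowDeriv a y).adjoint : E →L[ℝ] E)
      = (‖y‖ ^ a) ^ 2
        * (LinearMap.trace ℝ E L + (2 * a + a ^ 2) * (⟪L y, y⟫ / ‖y‖ ^ 2)) := by
  have cycle : LinearMap.trace ℝ E
        (radialPowDeriv a y ∘L L ∘L (radialPowDeriv a y).adjoint : E →L[ℝ] E)
      = LinearMap.trace ℝ E ((radialPowDeriv a y ∘L radialPowDeriv a y) ∘L L : E →L[ℝ] E) := by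
    rw [(isSelfAdjoint_radialPowDeriv a y).adjoint_eq]
    exact LinearMap.trace_mul_cycle ℝ (radialPowDeriv a y : E →ₗ[ℝ] E) L (radialPowDeriv a y)
  rw [cycle, radialPowDeriv_comp_self hy, ContinuousLinearMap.smul_comp,
    ContinuousLinearMap.toLinearMap_smul, map_smul, trace_id_add_smul_rankOne_comp, smul_eq_mul]
  ring

theorem trace_fderiv_smul {g : E → ℝ} {F : E → E} {x : E} (hg : DifferentiableAt ℝ g x)
    (hF : DifferentiableAt ℝ F x) :
    LinearMap.trace ℝ E (fderiv ℝ (fun z => g z • F z) x)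
      = g x * LinearMap.trace ℝ E (fderiv ℝ F x) + fderiv ℝ g x (F x) := by
  rw [fderiv_fun_smul hg hF]
  simp [LinearMap.trace_smulRight]

end RadialPow

/-! ### The integral inequality -/

section RadialHessian

variable {E : Type*} [NormedAddCommGroup E] [InnerProductSpace ℝ E] [CompleteSpace E]

/-- The trace of `D²H(x)`, i.e. the Euclidean Laplacian of `H`. -/
def hessianTrace (H : E → ℝ) (x : E) : ℝ := LinearMap.trace ℝ E (hessianMap H x)

/-- The second derivative of `H` at `x` in the direction `X/|X|`, `X = gradient H x`. For the
support function of a convex body it is `⟨∇̄ log r, ∇̄h⟩` on the sphere. -/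
def radialHessian (H : E → ℝ) (x : E) : ℝ :=
  ⟪hessianMap H x (gradient H x), gradient H x⟫ / ‖gradient H x‖ ^ 2

/-- The weight `h^p r^a`; for a solution of `h^{p-1} r^{-a} 𝒦 = 1` it is the density of
`r^{2a} dV`. -/
def powWeight (H : E → ℝ) (p a : ℝ) (x : E) : ℝ := H x ^ p * ‖gradient H x‖ ^ a

end RadialHessian

namespace IsRegularSupportFunction

variable {n : ℕ} {H : Euc n → ℝ} {x : Euc n} {p a : ℝ}

theorem hasStrictFDerivAt_inner_of_comp_hessianMap (hH : IsRegularSupportFunction n H)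
    (hx : x ≠ 0) {F : Euc n → Euc n} {M : Euc n →L[ℝ] Euc n}
    (hF : HasStrictFDerivAt F (M ∘L hessianMap H x) x) (v : Euc n) :
    HasStrictFDerivAt (fun z => ⟪v, F z⟫) (innerSL ℝ (hessianMap H x (M.adjoint v))) x := by
  refine ((innerSL ℝ v).hasStrictFDerivAt.comp x hF).congr_fderiv ?_
  ext u
  simp [inner_hessianMap_comm (hH.contDiffAt hx), ContinuousLinearMap.adjoint_inner_left]

theorem sum_hessianEnergy_adjoint {ι : Type*} [Fintype ι] (e : OrthonormalBasis ι ℝ (Euc n))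
    (H : Euc n → ℝ) (M : Euc n → Euc n →L[ℝ] Euc n) (x : Euc n) :
    ∑ i, hessianEnergy H (fun z => (M z).adjoint (e i)) x = H x * LinearMap.trace ℝ (Euc n)
      (M x ∘L hessianMap H x ∘L (M x).adjoint : Euc n →L[ℝ] Euc n) := by
  simp [hessianEnergy, LinearMap.trace_eq_sum_inner _ e, Finset.mul_sum,
    ContinuousLinearMap.adjoint_inner_right, real_inner_comm]

theorem mul_integral_volDens_mul_norm_sq_le (hH : IsRegularSupportFunction n H)
    {F : Euc n → Euc n} {M : Euc n → Euc n →L[ℝ] Euc n}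
    (hF : ∀ x ∈ sphere (0 : Euc n) 1, HasStrictFDerivAt F (M x ∘L hessianMap H x) x)
    (hM : ∀ x ∈ sphere (0 : Euc n) 1, ContinuousAt M x) :
    n * ∫ x : sphere (0 : Euc n) 1, volDens n H x * ‖F x‖ ^ 2 ∂sphMeasure n
      ≤ ∫ x : sphere (0 : Euc n) 1, volDens n H x * (H x * LinearMap.trace ℝ (Euc n)
            (M x ∘L hessianMap H x ∘L (M x).adjoint : Euc n →L[ℝ] Euc n)) ∂sphMeasure n
        + n * (‖∫ x : sphere (0 : Euc n) 1, volDens n H x • F x ∂sphMeasure n‖ ^ 2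
          / ∫ x : sphere (0 : Euc n) 1, volDens n H x ∂sphMeasure n) := by
  let e := EuclideanSpace.basisFun (Fin (n + 1)) ℝ
  have adjoint_cont : ∀ i, ∀ x ∈ sphere (0 : Euc n) 1,
      ContinuousAt (fun z => (M z).adjoint (e i)) x := fun i x hx =>
    (ContinuousLinearMap.adjoint.continuous.continuousAt.comp (hM x hx)).clm_apply
      continuousAt_const
  have F_cont : Continuous fun x : sphere (0 : Euc n) 1 => F x :=
    continuous_iff_continuousAt.2 fun x =>
      (hF x x.2).continuousAt.comp continuous_subtype_val.continuousAt
  have integrable : ∀ {G : Type} [NormedAddCommGroup G] {u : sphere (0 : Euc n) 1 → G},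
      Continuous u → Integrable u (sphMeasure n) :=
    fun hu => hu.integrable_of_hasCompactSupport (.of_compactSpace _)
  have vol_cont := hH.continuous_volDens_sphere
  have component_mean : ∀ i, ∫ x : sphere (0 : Euc n) 1, volDens n H x * ⟪e i, F x⟫ ∂sphMeasure n
      = ⟪e i, ∫ x : sphere (0 : Euc n) 1, volDens n H x • F x ∂sphMeasure n⟫ := fun i => by
    rw [← integral_inner (integrable (vol_cont.fun_smul F_cont))]
    simp only [real_inner_smul_right]
  have sum_components := Finset.sum_le_sum fun i (_ : i ∈ Finset.univ) =>
    hH.mul_integral_volDens_mul_sq_le (fun x hx =>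
      hH.hasStrictFDerivAt_inner_of_comp_hessianMap (ne_zero_of_mem_unit_sphere ⟨x, hx⟩)
        (hF x hx) (e i)) (adjoint_cont i)
  rw [← Finset.mul_sum, Finset.sum_add_distrib, ← Finset.mul_sum, ← Finset.sum_div,
    ← integral_finsetSum _ fun i _ => integrable
      (vol_cont.fun_mul ((continuous_const.inner F_cont).fun_pow 2)),
    ← integral_finsetSum _ fun i _ => integrable
      (vol_cont.fun_mul (hH.continuous_hessianEnergy_sphere (adjoint_cont i)))] at sum_components
  simpa only [← Finset.mul_sum, e.sum_sq_inner_right, component_mean, sum_hessianEnergy_adjoint]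
    using sum_components

theorem hasStrictFDerivAt_radialPow_gradient (hH : IsRegularSupportFunction n H) (hx : x ≠ 0) :
    HasStrictFDerivAt (fun z => radialPow a (gradient H z))
      (radialPowDeriv a (gradient H x) ∘L hessianMap H x) x :=
  (hasStrictFDerivAt_radialPow (hH.gradient_ne_zero hx)).comp x
    (hasStrictFDerivAt_gradient (hH.contDiffAt hx))

theorem mul_integral_volDens_mul_rpow_le (hH : IsRegularSupportFunction n H) (a : ℝ) :
    n * ∫ x : sphere (0 : Euc n) 1,
          volDens n H x * (‖gradient H x‖ ^ (2 * a) * ‖gradient H x‖ ^ 2) ∂sphMeasure n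
      ≤ ∫ x : sphere (0 : Euc n) 1, volDens n H x * (‖gradient H x‖ ^ (2 * a)
            * (H x * hessianTrace H x + (2 * a + a ^ 2) * (H x * radialHessian H x))) ∂sphMeasure n
        + n * (‖∫ x : sphere (0 : Euc n) 1,
              volDens n H x • (‖gradient H x‖ ^ a • gradient H x) ∂sphMeasure n‖ ^ 2
          / ∫ x : sphere (0 : Euc n) 1, volDens n H x ∂sphMeasure n) := by
  have rpow_two_mul : ∀ x, ‖gradient H x‖ ^ (2 * a) = (‖gradient H x‖ ^ a) ^ 2 := fun x => by
    rw [mul_comm, Real.rpow_mul (norm_nonneg _), Real.rpow_two]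
  have poincare := hH.mul_integral_volDens_mul_norm_sq_le
    (fun x hx => hH.hasStrictFDerivAt_radialPow_gradient (a := a)
      (ne_zero_of_mem_unit_sphere ⟨x, hx⟩))
    fun x hx => (continuousAt_radialPowDeriv
      (hH.gradient_ne_zero (ne_zero_of_mem_unit_sphere ⟨x, hx⟩))).comp
      (contDiffAt_gradient (hH.contDiffAt (ne_zero_of_mem_unit_sphere ⟨x, hx⟩))).continuousAt
  convert poincare using 5 with x x
  · rw [rpow_two_mul, radialPow, norm_smul, mul_pow, Real.norm_eq_abs, sq_abs]
  · rw [rpow_two_mul, trace_radialPowDeriv_comp_comp_adjoint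
      (hH.gradient_ne_zero (ne_zero_of_mem_unit_sphere x)), hessianTrace, radialHessian]
    ring
  · rfl

theorem contDiffAt_rpow_smul_radialPow_gradient (hH : IsRegularSupportFunction n H) (hx : x ≠ 0) :
    ContDiffAt ℝ 1 (fun z => H z ^ p • radialPow a (gradient H z)) x :=
  (((hH.contDiffAt hx).of_le one_le_two).rpow_const_of_ne (hH.pos hx).ne').smul
    ((contDiffAt_radialPow (m := 1) (hH.gradient_ne_zero hx)).comp x
      (contDiffAt_gradient (hH.contDiffAt hx)))

theorem nonneg (hH : IsRegularSupportFunction n H) (x : Euc n) : 0 ≤ H x := by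
  rcases eq_or_ne x 0 with rfl | hx
  · have h := hH.homogeneous 2 two_pos 0
    rw [smul_zero, Real.rpow_one, smul_eq_mul] at h
    linarith
  · exact (hH.pos hx).le

theorem isPosHomogeneous_rpow_smul_radialPow_gradient (hH : IsRegularSupportFunction n H)
    (p a : ℝ) : IsPosHomogeneous p fun z => H z ^ p • radialPow a (gradient H z) :=
  fun c hc z => by
    simp only [hH.homogeneous c hc, Real.rpow_one, smul_eq_mul, hH.gradient_smul hc, mul_smul,
      Real.mul_rpow hc.le (hH.nonneg z)]

theorem trace_fderiv_rpow_smul_radialPow_gradient (hH : IsRegularSupportFunction n H)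
    (hx : x ≠ 0) (p a : ℝ) :
    LinearMap.trace ℝ (Euc n) (fderiv ℝ (fun z => H z ^ (p + 1) • radialPow a (gradient H z)) x)
      = powWeight H p a x * (H x * hessianTrace H x) + a * (powWeight H p a x
          * (H x * radialHessian H x)) + (p + 1) * (powWeight H p a x * ‖gradient H x‖ ^ 2) := by
  have rpow_deriv := (hasFDerivAt_innerSL_gradient (hH.differentiableAt hx)).rpow_const
    (p := p + 1) (Or.inl (hH.pos hx).ne')
  have field_deriv := (hH.hasStrictFDerivAt_radialPow_gradient (a := a) hx).hasFDerivAt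
  rw [trace_fderiv_smul rpow_deriv.differentiableAt field_deriv.differentiableAt,
    rpow_deriv.fderiv, field_deriv.fderiv, trace_radialPowDeriv_comp]
  simp only [_root_.smul_apply, innerSL_apply_apply, radialPow, real_inner_smul_right,
    real_inner_self_eq_norm_sq, powWeight, hessianTrace, radialHessian, smul_eq_mul,
    Real.rpow_add_one (hH.pos hx).ne', add_sub_cancel_right]
  ring

theorem continuousOn_hessianTrace (hH : IsRegularSupportFunction n H) :
    ContinuousOn (hessianTrace H) {0}ᶜ :=
  (LinearMap.trace ℝ (Euc n) ∘ₗ ContinuousLinearMap.coeLM ℝ).continuous_of_finiteDimensional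
    |>.comp_continuousOn hH.continuousOn_hessianMap

theorem continuousOn_radialHessian (hH : IsRegularSupportFunction n H) :
    ContinuousOn (radialHessian H) {0}ᶜ :=
  ((hH.continuousOn_hessianMap.clm_apply hH.continuousOn_gradient).inner
    hH.continuousOn_gradient).div (hH.continuousOn_gradient.norm.pow 2)
      fun _ hx => pow_ne_zero 2 (norm_ne_zero_iff.2 (hH.gradient_ne_zero hx))

theorem integrable_powWeight_mul (hH : IsRegularSupportFunction n H) (p a : ℝ) {g : Euc n → ℝ}
    (hg : ContinuousOn g {0}ᶜ) :
    Integrable (fun x : sphere (0 : Euc n) 1 => powWeight H p a x * g x) (sphMeasure n) :=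
  integrable_toSphere_of_continuousOn
    (((hH.contDiffOn.continuousOn.rpow_const fun _ hx => Or.inl (hH.pos hx).ne').mul
      (hH.continuousOn_gradient.norm.rpow_const fun _ hx =>
        Or.inl (norm_ne_zero_iff.2 (hH.gradient_ne_zero hx)))).mul hg)

theorem integral_powWeight_mul_hessianTrace (hH : IsRegularSupportFunction n H) (p a : ℝ) :
    ∫ x : sphere (0 : Euc n) 1, powWeight H p a x * (H x * hessianTrace H x) ∂sphMeasure n
        + a * ∫ x : sphere (0 : Euc n) 1,
          powWeight H p a x * (H x * radialHessian H x) ∂sphMeasure n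
        + (p + 1) * ∫ x : sphere (0 : Euc n) 1,
          powWeight H p a x * ‖gradient H x‖ ^ 2 ∂sphMeasure n
      = (n + 1 + p) * ∫ x : sphere (0 : Euc n) 1, powWeight H p a x * H x ^ 2 ∂sphMeasure n := by
  have trace_term := hH.integrable_powWeight_mul p a
    (hH.contDiffOn.continuousOn.fun_mul hH.continuousOn_hessianTrace)
  have radial_term := hH.integrable_powWeight_mul p a
    (hH.contDiffOn.continuousOn.fun_mul hH.continuousOn_radialHessian)
  have norm_term := hH.integrable_powWeight_mul p a (hH.continuousOn_gradient.norm.fun_pow 2)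
  have smooth : ContDiffOn ℝ 1 (fun z => H z ^ (p + 1) • radialPow a (gradient H z)) {0}ᶜ :=
    fun x hx => (hH.contDiffAt_rpow_smul_radialPow_gradient hx).contDiffWithinAt
  have divergence := integral_sphere_trace_fderiv (μ := volume) smooth
    (hH.isPosHomogeneous_rpow_smul_radialPow_gradient (p + 1) a)
  have normal_part : ∀ x : sphere (0 : Euc n) 1,
      ⟪H x ^ (p + 1) • radialPow a (gradient H x), x.1⟫ = powWeight H p a x * H x ^ 2 := fun x => by
    have hx := ne_zero_of_mem_unit_sphere x
    rw [radialPow, real_inner_smul_left, real_inner_smul_left, hH.inner_gradient_self hx,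
      Real.rpow_add_one (hH.pos hx).ne', powWeight]
    ring
  simp only [normal_part, fun x : sphere (0 : Euc n) 1 =>
    hH.trace_fderiv_rpow_smul_radialPow_gradient (ne_zero_of_mem_unit_sphere x) p a] at divergence
  rw [← sphMeasure,
    integral_add (trace_term.fun_add (radial_term.const_mul a)) (norm_term.const_mul (p + 1)),
    integral_add trace_term (radial_term.const_mul a), integral_const_mul, integral_const_mul,
    finrank_euclideanSpace_fin, Nat.add_sub_cancel] at divergence
  rw [show (n : ℝ) + 1 + p = n + (p + 1) by ring]
  exact divergence

theorem sphGrad_eq (hH : IsRegularSupportFunction n H) (hx : x ∈ sphere (0 : Euc n) 1) :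
    sphGrad n H x = gradient H x - H x • x := by
  have hx0 : x ≠ 0 := ne_zero_of_mem_unit_sphere ⟨x, hx⟩
  have norm_inv_deriv := (hasDerivAt_inv (norm_ne_zero_iff.2 hx0)).comp_hasFDerivAt x
    (hasStrictFDerivAt_norm hx0).hasFDerivAt
  have extension_deriv := (norm_inv_deriv.mul (hasFDerivAt_innerSL_gradient
    (hH.differentiableAt hx0))).congr_of_eventuallyEq (f₁ := fun y => H (‖y‖⁻¹ • y)) <| by
      filter_upwards [isOpen_ne.mem_nhds hx0] with y hy
      simp [hH.homogeneous _ (inv_pos.2 (norm_pos_iff.2 hy))]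
  refine HasGradientAt.gradient (extension_deriv.congr_fderiv ?_)
  ext v
  simp [norm_eq_of_mem_sphere ⟨x, hx⟩, sub_eq_add_neg]

theorem sphGrad_log_norm_gradient (hH : IsRegularSupportFunction n H)
    (hx : x ∈ sphere (0 : Euc n) 1) :
    sphGrad n (fun y => Real.log ‖gradient H y‖) x
      = (‖gradient H x‖ ^ 2)⁻¹ • hessianMap H x (gradient H x) := by
  have hx0 : x ≠ 0 := ne_zero_of_mem_unit_sphere ⟨x, hx⟩
  have hr := norm_ne_zero_iff.2 (hH.gradient_ne_zero hx0)
  have log_deriv := ((hasStrictFDerivAt_norm (hH.gradient_ne_zero hx0)).hasFDerivAt.comp x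
    (hasStrictFDerivAt_gradient (hH.contDiffAt hx0)).hasFDerivAt).log hr
  have extension_deriv := log_deriv.congr_of_eventuallyEq
    (f₁ := fun y => Real.log ‖gradient H (‖y‖⁻¹ • y)‖) <| by
      filter_upwards [isOpen_ne.mem_nhds hx0] with y hy
      simp [hH.gradient_smul (inv_pos.2 (norm_pos_iff.2 hy))]
  refine HasGradientAt.gradient (extension_deriv.congr_fderiv ?_)
  ext v
  simp only [Function.comp_apply, ContinuousLinearMap.smul_comp, _root_.smul_apply,
    ContinuousLinearMap.comp_apply, coe_innerSL_apply, smul_eq_mul, map_smul,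
    InnerProductSpace.toDual_apply_apply, inner_hessianMap_comm (hH.contDiffAt hx0)]
  ring

theorem norm_sphGrad_sq (hH : IsRegularSupportFunction n H) (hx : x ∈ sphere (0 : Euc n) 1) :
    ‖sphGrad n H x‖ ^ 2 = ‖gradient H x‖ ^ 2 - H x ^ 2 := by
  rw [hH.sphGrad_eq hx, norm_sub_sq_real, real_inner_smul_right,
    hH.inner_gradient_self (ne_zero_of_mem_unit_sphere ⟨x, hx⟩), norm_smul,
    norm_eq_of_mem_sphere ⟨x, hx⟩, mul_one, Real.norm_eq_abs, sq_abs]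
  ring

theorem inner_sphGrad_log_norm_gradient (hH : IsRegularSupportFunction n H)
    (hx : x ∈ sphere (0 : Euc n) 1) :
    ⟪sphGrad n (fun y => Real.log ‖gradient H y‖) x, H x • sphGrad n H x⟫
      = H x * radialHessian H x := by
  have hx0 : x ≠ 0 := ne_zero_of_mem_unit_sphere ⟨x, hx⟩
  have tangential : ⟪hessianMap H x (gradient H x), x⟫ = 0 := by
    rw [inner_hessianMap_comm (hH.contDiffAt hx0), hH.hessianMap_self hx0, inner_zero_right]
  rw [hH.sphGrad_eq hx, hH.sphGrad_log_norm_gradient hx, radialHessian, real_inner_smul_left,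
    real_inner_smul_right, inner_sub_right, real_inner_smul_right, tangential]
  ring

theorem volDens_mul_rpow_eq_powWeight (hH : IsRegularSupportFunction n H)
    (hx : x ∈ sphere (0 : Euc n) 1)
    (heq : H x ^ (p - 1) * ‖gradient H x‖ ^ (-a) * gaussCurv n H x = 1) :
    volDens n H x * ‖gradient H x‖ ^ (2 * a) = powWeight H p a x := by
  have hx0 : x ≠ 0 := ne_zero_of_mem_unit_sphere ⟨x, hx⟩
  have hr : 0 < ‖gradient H x‖ := norm_pos_iff.2 (hH.gradient_ne_zero hx0)
  have sigman_eq : sigman n H x = H x ^ (p - 1) * ‖gradient H x‖ ^ (-a) :=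
    (eq_of_mul_inv_eq_one heq).symm
  rw [volDens, sigman_eq, powWeight, Real.rpow_sub_one (hH.pos hx0).ne', mul_assoc, mul_assoc,
    ← Real.rpow_add hr, show -a + 2 * a = a by ring, ← mul_assoc,
    mul_div_cancel₀ _ (hH.pos hx0).ne']

end IsRegularSupportFunction

theorem key_integral_inequality_general {n : ℕ} {p q α : ℝ} (hα : α = q - (n : ℝ) - 1)
    {H : Euc n → ℝ} (hH : IsRegularSupportFunction n H)
    (heq : ∀ x ∈ sphere (0 : Euc n) 1,
      H x ^ (p - 1) * ‖gradient H x‖ ^ ((n : ℝ) + 1 - q) * gaussCurv n H x = 1) :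
    ((n : ℝ) + 1 + p) * ∫ x : sphere (0 : Euc n) 1,
          volDens n H x * (‖gradient H x‖ ^ (2 * α) * ‖sphGrad n H x‖ ^ 2) ∂(sphMeasure n)
      ≤ α * (α + 1) * (∫ x : sphere (0 : Euc n) 1,
            volDens n H x * (‖gradient H x‖ ^ (2 * α) *
              ⟪sphGrad n (fun y => Real.log ‖gradient H y‖) x, H x • sphGrad n H x⟫)
            ∂(sphMeasure n))
        + (n : ℝ) * ‖∫ x : sphere (0 : Euc n) 1,
              volDens n H x • (‖gradient H x‖ ^ α • gradient H x) ∂(sphMeasure n)‖ ^ 2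
            / ∫ x : sphere (0 : Euc n) 1, volDens n H x ∂(sphMeasure n) := by
  have density (x : sphere (0 : Euc n) 1) (t : ℝ) :
      volDens n H x * (‖gradient H x‖ ^ (2 * α) * t) = powWeight H p α x * t := by
    rw [← mul_assoc, hH.volDens_mul_rpow_eq_powWeight x.2]
    rw [show -α = n + 1 - q by linarith]
    exact heq x x.2
  have poincare := hH.mul_integral_volDens_mul_rpow_le α
  have divergence := hH.integral_powWeight_mul_hessianTrace p α
  simp only [density, hH.norm_sphGrad_sq (Subtype.prop _),
    hH.inner_sphGrad_log_norm_gradient (Subtype.prop _), mul_sub, mul_add,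
    mul_left_comm (powWeight H p α _) (2 * α + α ^ 2)] at poincare ⊢
  have trace_term := hH.integrable_powWeight_mul p α
    (hH.contDiffOn.continuousOn.fun_mul hH.continuousOn_hessianTrace)
  have radial_term := hH.integrable_powWeight_mul p α
    (hH.contDiffOn.continuousOn.fun_mul hH.continuousOn_radialHessian)
  have norm_term := hH.integrable_powWeight_mul p α (hH.continuousOn_gradient.norm.fun_pow 2)
  have support_term := hH.integrable_powWeight_mul p α (hH.contDiffOn.continuousOn.fun_pow 2)
  rw [integral_add trace_term (radial_term.const_mul _), integral_const_mul] at poincare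
  rw [integral_sub norm_term support_term, mul_div_assoc]
  linarith

/-- For a smooth, strictly convex body `K ⊂ ℝ^{n+1}` (`n ≥ 2`) with the
origin in its interior satisfying `h^{p-1}|Dh|^{n+1-q}𝒦 = 1` on `S^n`, with `α = q - n - 1`:
`(n+1+p) ∫ r^{2α}|∇̄h|² dV ≤ α(α+1) ∫ r^{2α} ⟨∇̄ log r, h∇̄h⟩ dV + n|∫ r^α X dV|²/∫ dV`. -/
theorem key_integral_inequality
    (n : ℕ) (hn : 2 ≤ n) (p q α : ℝ) (hα : α = q - (n : ℝ) - 1)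
    (H : Euc n → ℝ) (K : Set (Euc n))
    (hK : K = {y : Euc n | ∀ x : Euc n, ⟪x, y⟫ ≤ H x})
    (hhomog : ∀ c : ℝ, 0 < c → ∀ x : Euc n, H (c • x) = c * H x)
    (hconv : ConvexOn ℝ Set.univ H)
    (hsmooth : ContDiffOn ℝ (⊤ : ℕ∞) H {(0 : Euc n)}ᶜ)
    (hpos : ∀ x ∈ sphere (0 : Euc n) 1, 0 < H x)
    (hposdef : ∀ x ∈ sphere (0 : Euc n) 1, (bmat n H x).PosDef)
    (heq : ∀ x ∈ sphere (0 : Euc n) 1,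
      H x ^ (p - 1) * ‖gradient H x‖ ^ ((n : ℝ) + 1 - q) * gaussCurv n H x = 1) :
    ((n : ℝ) + 1 + p) * ∫ x : sphere (0 : Euc n) 1,
          volDens n H x * (‖gradient H x‖ ^ (2 * α) * ‖sphGrad n H x‖ ^ 2) ∂(sphMeasure n)
      ≤ α * (α + 1) * (∫ x : sphere (0 : Euc n) 1,
            volDens n H x * (‖gradient H x‖ ^ (2 * α) *
              ⟪sphGrad n (fun y => Real.log ‖gradient H y‖) x, H x • sphGrad n H x⟫)
            ∂(sphMeasure n))
        + (n : ℝ) * ‖∫ x : sphere (0 : Euc n) 1,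
              volDens n H x • (‖gradient H x‖ ^ α • gradient H x) ∂(sphMeasure n)‖ ^ 2
            / ∫ x : sphere (0 : Euc n) 1, volDens n H x ∂(sphMeasure n) := by
  exact key_integral_inequality_general hα ⟨fun c hc x => by simpa using hhomog c hc x, hconv,
    mod_cast contDiffOn_infty.1 hsmooth 2, hpos, hposdef⟩ heq
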